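/- arXiv:2101.03728 — 7 statements merged into one kernel-verified Lean document; each statement's English description precedes it below -/
import Mathlib

section
/- Let s≥0 and s₁>1/2. Then for all f∈H^{s+s₁}(𝕋) and g∈H^s(𝕋), the product fg satisfies ‖fg‖_{H^s} ≤ C‖f‖_{H^{s+s₁}}‖g‖_{H^s}, where the constant C depends only on s and s₁. -/
/-!
On the Fourier side the estimate is a weighted Young inequality. With `⟨k⟩² = 1 + k²`, Peetre's
inequality `⟨k⟩² ≤ 2 ⟨k-j⟩² ⟨j⟩²` (`peetre`) distributes the weight `⟨k⟩^{2s}` over the two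
factors of the convolution. Cauchy–Schwarz (`norm_tsum_sq_le`), with the summable weight
`⟨k-j⟩^{-2s₁}` split off, bounds `⟨k⟩^{2s} |(f * g)_k|²` by
`2^s K ∑_j ⟨k-j⟩^{2(s+s₁)} |f_{k-j}|² ⟨j⟩^{2s} |g_j|²`, where `K = ∑_m ⟨m⟩^{-2s₁}` is finite because
`s₁ > 1/2` (`summable_weight`). Summing over `k`, the double sum factors as the product of the two
Sobolev sums (`sobolev_conv_bound`).
-/

noncomputable section

open Complex MeasureTheory
open scoped BigOperators

/-- A function on the torus `𝕋 = (-π,π)` is represented by its sequence of Fourier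
coefficients `f̂ : ℤ → ℂ`. -/
abbrev FSeq := ℤ → ℂ

/-- Membership in the Sobolev space `H^s(𝕋)`:
`∑_{k∈ℤ} (1+k²)^s |f̂_k|² < ∞`. -/
def InHs (s : ℝ) (a : FSeq) : Prop :=
  Summable fun k : ℤ => (1 + (k : ℝ) ^ 2) ^ s * ‖a k‖ ^ 2

/-- The `H^s(𝕋)` norm: `‖f‖_{H^s}² = 2π ∑_{k∈ℤ} (1+k²)^s |f̂_k|²`. -/
def hnorm (s : ℝ) (a : FSeq) : ℝ :=
  Real.sqrt (2 * Real.pi * ∑' k : ℤ, (1 + (k : ℝ) ^ 2) ^ s * ‖a k‖ ^ 2)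

/-- Convolution of Fourier coefficient sequences: the coefficients of the
pointwise product of two functions. -/
def conv (a b : FSeq) : FSeq := fun k => ∑' j : ℤ, a (k - j) * b j

/-- Peetre's inequality, raised to a power `s ≥ 0`. -/
lemma peetre {s : ℝ} (hs : 0 ≤ s) (k j : ℤ) :
    (1 + (k : ℝ) ^ 2) ^ s ≤
      2 ^ s * ((1 + ((k - j : ℤ) : ℝ) ^ 2) ^ s * (1 + (j : ℝ) ^ 2) ^ s) := by
  rw [← Real.mul_rpow (by positivity) (by positivity),
    ← Real.mul_rpow (by positivity) (by positivity)]
  refine Real.rpow_le_rpow (by positivity) ?_ hs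
  push_cast
  nlinarith [sq_nonneg ((k : ℝ) - 2 * j), sq_nonneg (((k : ℝ) - j) * j)]

lemma summable_weight {s₁ : ℝ} (hs₁ : 1 / 2 < s₁) :
    Summable fun k : ℤ => (1 + (k : ℝ) ^ 2) ^ (-s₁) := by
  refine (Real.summable_abs_int_rpow (b := 2 * s₁) (by linarith)).of_norm_bounded_eventually ?_
  -- The comparison with `|k|^{-2s₁}` can fail only at `k = 0`.
  rw [Filter.eventually_cofinite]
  refine (Set.finite_singleton (0 : ℤ)).subset fun k hk => ?_
  by_contra h0
  refine hk ?_
  have hk0 : (0 : ℝ) < |(k : ℝ)| := by simpa using h0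
  rw [Real.norm_of_nonneg (by positivity), ← mul_neg, Real.rpow_mul hk0.le]
  refine Real.rpow_le_rpow_of_nonpos (by positivity) ?_ (by linarith)
  rw [Real.rpow_two, sq_abs]
  linarith

/-- Cauchy–Schwarz for infinite sums. The terms `x i` need not be assumed summable: otherwise the
left-hand side is `0` by convention. -/
lemma norm_tsum_sq_le {ι : Type*} {x : ι → ℂ} {p q : ι → ℝ} (hp : ∀ i, 0 ≤ p i)
    (hq : ∀ i, 0 ≤ q i) (hps : Summable p) (hqs : Summable q)
    (h : ∀ i, ‖x i‖ ^ 2 ≤ p i * q i) :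
    ‖∑' i, x i‖ ^ 2 ≤ (∑' i, p i) * ∑' i, q i := by
  by_cases hx : Summable x
  · refine le_of_tendsto ((hx.hasSum.norm).pow 2) (Filter.Eventually.of_forall fun t => ?_)
    calc ‖∑ i ∈ t, x i‖ ^ 2 ≤ (∑ i ∈ t, ‖x i‖) ^ 2 := by
          gcongr
          exact norm_sum_le _ _
      _ ≤ (∑ i ∈ t, p i) * ∑ i ∈ t, q i :=
          Finset.sum_sq_le_sum_mul_sum_of_sq_le_mul t (fun i _ => hp i) (fun i _ => hq i)
            fun i _ => h i
      _ ≤ _ := mul_le_mul (hps.sum_le_tsum t fun i _ => hp i) (hqs.sum_le_tsum t fun i _ => hq i)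
          (Finset.sum_nonneg fun i _ => hq i) (tsum_nonneg hp)
  · rw [tsum_eq_zero_of_not_summable hx]
    simpa using mul_nonneg (tsum_nonneg hp) (tsum_nonneg hq)

/-- The square of the claimed estimate, without the factors `2π`. -/
lemma sobolev_conv_bound {s s₁ : ℝ} (hs : 0 ≤ s) (hs₁ : 1 / 2 < s₁) {f g : FSeq}
    (hf : InHs (s + s₁) f) (hg : InHs s g) :
    ∑' k : ℤ, (1 + (k : ℝ) ^ 2) ^ s * ‖conv f g k‖ ^ 2 ≤
      (2 ^ s * ∑' m : ℤ, (1 + (m : ℝ) ^ 2) ^ (-s₁)) *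
        ((∑' k : ℤ, (1 + (k : ℝ) ^ 2) ^ (s + s₁) * ‖f k‖ ^ 2) *
          ∑' k : ℤ, (1 + (k : ℝ) ^ 2) ^ s * ‖g k‖ ^ 2) := by
  set P : ℤ → ℝ := fun k => (1 + (k : ℝ) ^ 2) ^ (s + s₁) * ‖f k‖ ^ 2 with hP
  set Q : ℤ → ℝ := fun k => (1 + (k : ℝ) ^ 2) ^ s * ‖g k‖ ^ 2 with hQ
  set K : ℝ := ∑' m : ℤ, (1 + (m : ℝ) ^ 2) ^ (-s₁) with hK
  have hPs : Summable P := hf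
  have hQs : Summable Q := hg
  have hP0 : ∀ k, 0 ≤ P k := fun k => by positivity
  have hQ0 : ∀ k, 0 ≤ Q k := fun k => by positivity
  have hPQ : Summable fun z : ℤ × ℤ => P z.1 * Q z.2 := hPs.mul_of_nonneg hQs hP0 hQ0
  -- The shear `(k, j) ↦ (k - j, j)` of the index lattice.
  let e : ℤ × ℤ ≃ ℤ × ℤ :=
    { toFun := fun z => (z.1 - z.2, z.2)
      invFun := fun z => (z.1 + z.2, z.2)
      left_inv := fun z => by simp
      right_inv := fun z => by simp }
  have hR : Summable fun z : ℤ × ℤ => P (z.1 - z.2) * Q z.2 := e.summable_iff.mpr hPQ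
  have hsum : ∑' k : ℤ, ∑' j : ℤ, P (k - j) * Q j = (∑' k, P k) * ∑' k, Q k := by
    rw [← hR.tsum_prod, hPs.tsum_mul_tsum hQs hPQ]
    exact e.tsum_eq fun z : ℤ × ℤ => P z.1 * Q z.2
  have hterm : ∀ k : ℤ, (1 + (k : ℝ) ^ 2) ^ s * ‖conv f g k‖ ^ 2 ≤
      (2 ^ s * K) * ∑' j : ℤ, P (k - j) * Q j := by
    intro k
    have hw : (0 : ℝ) < (1 + (k : ℝ) ^ 2) ^ s := by positivity
    have hshift : ∑' j : ℤ, (1 + ((k - j : ℤ) : ℝ) ^ 2) ^ (-s₁) = K :=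
      (Equiv.subLeft k).tsum_eq fun m : ℤ => (1 + (m : ℝ) ^ 2) ^ (-s₁)
    have hcs := norm_tsum_sq_le (x := fun j : ℤ => f (k - j) * g j)
      (p := fun j : ℤ => (1 + ((k - j : ℤ) : ℝ) ^ 2) ^ (-s₁))
      (q := fun j : ℤ => (2 ^ s * ((1 + (k : ℝ) ^ 2) ^ s)⁻¹) * (P (k - j) * Q j))
      (fun j => by positivity)
      (fun j => mul_nonneg (by positivity) (mul_nonneg (hP0 _) (hQ0 _)))
      ((Equiv.subLeft k).summable_iff.mpr (summable_weight hs₁))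
      ((hR.prod_factor k).mul_left _)
      (fun j => by
        have hu : (0 : ℝ) < 1 + ((k - j : ℤ) : ℝ) ^ 2 := by positivity
        have h1 : (1 + ((k - j : ℤ) : ℝ) ^ 2) ^ (-s₁) * (1 + ((k - j : ℤ) : ℝ) ^ 2) ^ (s + s₁)
            = (1 + ((k - j : ℤ) : ℝ) ^ 2) ^ s := by
          rw [← Real.rpow_add hu]
          congr 1
          ring
        calc ‖f (k - j) * g j‖ ^ 2 = 1 * (‖f (k - j)‖ ^ 2 * ‖g j‖ ^ 2) := by
              rw [norm_mul, mul_pow, one_mul]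
          _ ≤ (((1 + (k : ℝ) ^ 2) ^ s)⁻¹ * (2 ^ s * ((1 + ((k - j : ℤ) : ℝ) ^ 2) ^ s *
                (1 + (j : ℝ) ^ 2) ^ s))) * (‖f (k - j)‖ ^ 2 * ‖g j‖ ^ 2) := by
              refine mul_le_mul_of_nonneg_right ?_ (by positivity)
              exact (inv_mul_cancel₀ hw.ne').symm.le.trans
                (mul_le_mul_of_nonneg_left (peetre hs k j) (inv_nonneg.mpr hw.le))
          _ = _ := by
              rw [← h1]
              simp only [hP, hQ]
              ring)
    rw [hshift, tsum_mul_left] at hcs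
    calc (1 + (k : ℝ) ^ 2) ^ s * ‖conv f g k‖ ^ 2
        ≤ (1 + (k : ℝ) ^ 2) ^ s * (K * ((2 ^ s * ((1 + (k : ℝ) ^ 2) ^ s)⁻¹) *
            ∑' j : ℤ, P (k - j) * Q j)) := mul_le_mul_of_nonneg_left hcs hw.le
      _ = _ := by field_simp
  have hRk : Summable fun k : ℤ => (2 ^ s * K) * ∑' j : ℤ, P (k - j) * Q j :=
    hR.prod.mul_left _
  calc _ ≤ ∑' k : ℤ, (2 ^ s * K) * ∑' j : ℤ, P (k - j) * Q j :=
        (hRk.of_nonneg_of_le (fun k => by positivity) hterm).tsum_le_tsum hterm hRk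
    _ = _ := by rw [tsum_mul_left, hsum]

theorem kato_ponce_ii (s s₁ : ℝ) (hs : 0 ≤ s) (hs₁ : 1 / 2 < s₁) :
    ∃ C : ℝ, 0 < C ∧ ∀ f g : FSeq, InHs (s + s₁) f → InHs s g →
      hnorm s (conv f g) ≤ C * hnorm (s + s₁) f * hnorm s g := by
  have hK : 0 < ∑' m : ℤ, (1 + (m : ℝ) ^ 2) ^ (-s₁) :=
    (summable_weight hs₁).tsum_pos (fun m => by positivity) 0 (by positivity)
  refine ⟨Real.sqrt (2 ^ s * ∑' m : ℤ, (1 + (m : ℝ) ^ 2) ^ (-s₁)), by positivity, ?_⟩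
  intro f g hf hg
  have hb := sobolev_conv_bound hs hs₁ hf hg
  unfold hnorm
  have hA : 0 ≤ ∑' k : ℤ, (1 + (k : ℝ) ^ 2) ^ (s + s₁) * ‖f k‖ ^ 2 :=
    tsum_nonneg fun k => by positivity
  have hB : 0 ≤ ∑' k : ℤ, (1 + (k : ℝ) ^ 2) ^ s * ‖g k‖ ^ 2 :=
    tsum_nonneg fun k => by positivity
  rw [← Real.sqrt_mul (by positivity), ← Real.sqrt_mul (by positivity)]
  refine Real.sqrt_le_sqrt ?_
  -- The right-hand side carries one more factor `2π` than needed, and `2π ≥ 1`.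
  have hpi : 1 ≤ 2 * Real.pi := by linarith [Real.pi_gt_three]
  refine (mul_le_mul_of_nonneg_left hb (by positivity)).trans ?_
  refine (le_mul_of_one_le_left (by positivity) hpi).trans (le_of_eq ?_)
  ring

end
end

section
/- Let s>1/2. Then for all f,g∈H^s(𝕋): ‖J^{−1}(Jf·g)‖_{H^s} ≤ C‖f‖_{H^s}‖g‖_{H^s}, where the constant C depends only on s. -/
/-!
Put `A k = ⟨k⟩^s |f̂_k|` and `B k = ⟨k⟩^s |ĝ_k|`, two `ℓ²` sequences. The `k`-th coefficient of
`J⁻¹(Jf · g)`, weighted by `⟨k⟩^s`, is at most `∑_j w(k,j) A(k-j) B(j)` with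
`w(k,j) = ⟨k⟩^(s-1) ⟨k-j⟩^(1-s) ⟨j⟩^(-s)`.

The triangle inequality between `⟨k⟩`, `⟨k-j⟩`, `⟨j⟩` gives the symmetric bound
`w(k,j) ≤ c (⟨j⟩^(-s) + ⟨k-j⟩^(-s) + ⟨k⟩^(-s))` with `c = 2^|s-1|` (`weight_le`).
For `s > 1/2` the sequence `⟨k⟩^(-s)` is in `ℓ²` (`summable_bracket_rpow`), with square sum `S`.
By Cauchy–Schwarz in `j`, the square of the part of the sum carrying the first two weights is at
most `4 S ∑_j A(k-j)² B(j)²`, and the square of the part carrying the last one is at most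
`⟨k⟩^(-2s) ‖A‖² ‖B‖²`; both are summable in `k`, with sums `4 S ‖A‖² ‖B‖²` and `S ‖A‖² ‖B‖²`
(`conv_bound`).
-/

noncomputable section

open Complex MeasureTheory
open scoped BigOperators

/-- The Bessel-potential operator `J^s`, a Fourier multiplier with symbol
`⟨k⟩^s = (1+k²)^{s/2}`. -/
def Jpow (s : ℝ) (a : FSeq) : FSeq := fun k => (((1 + (k : ℝ) ^ 2) ^ (s / 2) : ℝ) : ℂ) * a k

/-- The Japanese bracket `⟨k⟩ = (1+k²)^{1/2}`. -/
def bracket (k : ℤ) : ℝ := Real.sqrt (1 + (k : ℝ) ^ 2)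

lemma one_le_bracket (k : ℤ) : 1 ≤ bracket k :=
  Real.one_le_sqrt.2 (by nlinarith [sq_nonneg (k : ℝ)])

lemma bracket_pos (k : ℤ) : 0 < bracket k := lt_of_lt_of_le one_pos (one_le_bracket k)

lemma bracket_rpow (k : ℤ) (t : ℝ) : bracket k ^ t = (1 + (k : ℝ) ^ 2) ^ (t / 2) := by
  rw [bracket, Real.sqrt_eq_rpow, ← Real.rpow_mul (by positivity)]
  congr 1
  ring

lemma bracket_rpow_sq (k : ℤ) (t : ℝ) : (bracket k ^ t) ^ 2 = (1 + (k : ℝ) ^ 2) ^ t := by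
  rw [bracket_rpow, ← Real.rpow_natCast, ← Real.rpow_mul (by positivity)]
  congr 1
  push_cast
  ring

lemma bracket_add_le (m j : ℤ) : bracket (m + j) ≤ bracket m + bracket j := by
  have hm := bracket_pos m
  have hj := bracket_pos j
  have hm2 : bracket m ^ 2 = 1 + (m : ℝ) ^ 2 := Real.sq_sqrt (by positivity)
  have hj2 : bracket j ^ 2 = 1 + (j : ℝ) ^ 2 := Real.sq_sqrt (by positivity)
  refine Real.sqrt_le_iff.2 ⟨by positivity, ?_⟩
  have h1 : |(m : ℝ)| ≤ bracket m := Real.abs_le_sqrt (by linarith)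
  have h2 : |(j : ℝ)| ≤ bracket j := Real.abs_le_sqrt (by linarith)
  have h3 : (m : ℝ) * j ≤ bracket m * bracket j := by
    calc (m : ℝ) * j ≤ |(m : ℝ) * j| := le_abs_self _
      _ = |(m : ℝ)| * |(j : ℝ)| := abs_mul _ _
      _ ≤ _ := by gcongr
  push_cast
  nlinarith

lemma bracket_neg (m : ℤ) : bracket (-m) = bracket m := by simp [bracket]

lemma summable_bracket_rpow {s : ℝ} (hs : 1 / 2 < s) :
    Summable fun k : ℤ => (bracket k ^ (-s)) ^ 2 := by
  refine Summable.of_norm_bounded_eventually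
    (Real.summable_abs_int_rpow (b := 2 * s) (by linarith)) ?_
  filter_upwards [(Set.finite_singleton (0 : ℤ)).compl_mem_cofinite] with k hk
  have hk0 : (k : ℝ) ≠ 0 := by simpa using hk
  have hpos : 0 < |(k : ℝ)| := abs_pos.2 hk0
  have h1 : |(k : ℝ)| ≤ bracket k := Real.abs_le_sqrt (by linarith)
  rw [Real.norm_of_nonneg (by positivity), show -(2 * s) = -s * (2 : ℕ) by push_cast; ring,
    Real.rpow_mul hpos.le, Real.rpow_natCast]
  have := Real.rpow_le_rpow_of_nonpos hpos h1 (show -s ≤ 0 by linarith)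
  have h0 := Real.rpow_nonneg (bracket_pos k).le (-s)
  gcongr

/-- If `z ≤ y`, then `x ≤ 2y` and the quotient `(x/y)^t` is bounded; if `y ≤ z`, then `x ≤ 2z` and
the remaining nonpositive power `z^(t-s)` is at most `y^(t-s)`. -/
lemma ratio_weight_le {x y z t s : ℝ} (hy : 0 < y) (hx : 0 < x) (hz : 0 < z)
    (ht : 0 ≤ t) (hts : t ≤ s) (h : x ≤ y + z) :
    x ^ t * y ^ (-t) * z ^ (-s) ≤ 2 ^ t * (z ^ (-s) + y ^ (-s)) := by
  have hzs := Real.rpow_nonneg hz.le (-s)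
  have hys := Real.rpow_nonneg hy.le (-s)
  have h2 : (0 : ℝ) ≤ 2 ^ t := by positivity
  have hyt := Real.rpow_nonneg hy.le (-t)
  rcases le_total z y with hzy | hyz
  · have h1 : x ^ t ≤ 2 ^ t * y ^ t := by
      rw [← Real.mul_rpow (by norm_num) hy.le]
      exact Real.rpow_le_rpow hx.le (by linarith) ht
    have h3 : y ^ t * y ^ (-t) = 1 := by rw [← Real.rpow_add hy]; simp
    calc x ^ t * y ^ (-t) * z ^ (-s) ≤ (2 ^ t * y ^ t) * y ^ (-t) * z ^ (-s) := by gcongr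
      _ = 2 ^ t * z ^ (-s) := by rw [mul_assoc (2 ^ t), h3, mul_one]
      _ ≤ _ := by nlinarith
  · have h1 : x ^ t ≤ 2 ^ t * z ^ t := by
      rw [← Real.mul_rpow (by norm_num) hz.le]
      exact Real.rpow_le_rpow hx.le (by linarith) ht
    have h3 : z ^ t * z ^ (-s) = z ^ (t - s) := by rw [← Real.rpow_add hz]; rfl
    have h4 : z ^ (t - s) ≤ y ^ (t - s) := Real.rpow_le_rpow_of_nonpos hy hyz (by linarith)
    have h5 : y ^ (t - s) * y ^ (-t) = y ^ (-s) := by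
      rw [← Real.rpow_add hy]; congr 1; ring
    calc x ^ t * y ^ (-t) * z ^ (-s) ≤ (2 ^ t * z ^ t) * y ^ (-t) * z ^ (-s) := by gcongr
      _ = 2 ^ t * ((z ^ t * z ^ (-s)) * y ^ (-t)) := by ring
      _ ≤ 2 ^ t * (y ^ (t - s) * y ^ (-t)) := by rw [h3]; gcongr
      _ = 2 ^ t * y ^ (-s) := by rw [h5]
      _ ≤ _ := by nlinarith

/-- The symmetric bound on the convolution weight. For `s ≥ 1` the large frequency is compared
through `⟨k⟩ ≤ ⟨k-j⟩ + ⟨j⟩`, for `s < 1` through `⟨k-j⟩ ≤ ⟨k⟩ + ⟨j⟩`. -/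
lemma weight_le {s : ℝ} (hs : 1 / 2 < s) (k j : ℤ) :
    bracket k ^ (s - 1) * bracket (k - j) ^ (1 - s) * bracket j ^ (-s) ≤
      2 ^ |s - 1| * ((bracket j ^ (-s) + bracket (k - j) ^ (-s)) + bracket k ^ (-s)) := by
  have hk := bracket_pos k
  have hm := bracket_pos (k - j)
  have hj := bracket_pos j
  have h2 : (0 : ℝ) ≤ 2 ^ |s - 1| := by positivity
  have p1 := mul_nonneg h2 (Real.rpow_nonneg hk.le (-s))
  have p2 := mul_nonneg h2 (Real.rpow_nonneg hm.le (-s))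
  rcases le_total 1 s with h | h
  · have h3 := bracket_add_le (k - j) j
    rw [sub_add_cancel] at h3
    have := ratio_weight_le (t := s - 1) (s := s) hm hk hj (by linarith) (by linarith) h3
    rw [neg_sub] at this
    rw [abs_of_nonneg (by linarith)] at *
    linarith
  · have h3 := bracket_add_le k (-j)
    rw [← sub_eq_add_neg, bracket_neg] at h3
    have := ratio_weight_le (t := 1 - s) (s := s) hk hm hj (by linarith) (by linarith) h3
    rw [neg_sub, mul_comm (bracket (k - j) ^ (1 - s))] at this
    rw [abs_of_nonpos (by linarith), neg_sub] at *
    linarith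

/-- Cauchy–Schwarz for nonnegative `ℓ²` sequences. -/
lemma cauchy_schwarz_tsum {ι : Type*} {a b : ι → ℝ} (ha : ∀ i, 0 ≤ a i) (hb : ∀ i, 0 ≤ b i)
    (ha2 : Summable fun i => a i ^ 2) (hb2 : Summable fun i => b i ^ 2) :
    (Summable fun i => a i * b i) ∧
      (∑' i, a i * b i) ^ 2 ≤ (∑' i, a i ^ 2) * ∑' i, b i ^ 2 := by
  have h := Real.summable_and_inner_le_Lp_mul_Lq_tsum_of_nonneg
    Real.HolderConjugate.two_two ha hb (by simpa using ha2) (by simpa using hb2)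
  refine ⟨h.1, ?_⟩
  have h1 := h.2
  simp only [Real.rpow_ofNat, ← Real.sqrt_eq_rpow] at h1
  have h0 : 0 ≤ ∑' i, a i * b i := tsum_nonneg fun i => mul_nonneg (ha i) (hb i)
  calc _ ≤ (√(∑' i, a i ^ 2) * √(∑' i, b i ^ 2)) ^ 2 := by gcongr
    _ = _ := by
      rw [mul_pow, Real.sq_sqrt (tsum_nonneg fun i => sq_nonneg _),
        Real.sq_sqrt (tsum_nonneg fun i => sq_nonneg _)]

/-- The shear `(k, j) ↦ (k - j, j)`, which turns convolution sums into product sums. -/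
def shear : ℤ × ℤ ≃ ℤ × ℤ where
  toFun p := (p.1 - p.2, p.2)
  invFun p := (p.1 + p.2, p.2)
  left_inv p := by simp
  right_inv p := by simp

/-- Young's identity `‖u * v‖₁ = ‖u‖₁ ‖v‖₁` for nonnegative sequences. -/
lemma tsum_conv {u v : ℤ → ℝ} (hu : 0 ≤ u) (hv : 0 ≤ v) (su : Summable u) (sv : Summable v) :
    (∀ k, Summable fun j => u (k - j) * v j) ∧ (Summable fun k => ∑' j, u (k - j) * v j) ∧
      ∑' k, ∑' j, u (k - j) * v j = (∑' k, u k) * ∑' k, v k := by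
  have h := su.mul_of_nonneg sv hu hv
  have h' : Summable fun p : ℤ × ℤ => u (p.1 - p.2) * v p.2 := shear.summable_iff.2 h
  have h2 := (summable_prod_of_nonneg (fun p => mul_nonneg (hu _) (hv _))).1 h'
  refine ⟨h2.1, h2.2, ?_⟩
  rw [su.tsum_mul_tsum sv h, ← shear.tsum_eq]
  exact (h'.tsum_prod' h2.1).symm

/-- The `ℓ²` estimate behind the theorem: a convolution with weight
`(ω(j) + ω(k-j)) + ω(k)`, `ω ∈ ℓ²`, maps `ℓ² × ℓ²` to `ℓ²`. -/
lemma conv_bound {ω A B : ℤ → ℝ} (hω : ∀ k, 0 ≤ ω k) (hA : ∀ k, 0 ≤ A k) (hB : ∀ k, 0 ≤ B k)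
    (sω : Summable fun k => ω k ^ 2) (sA : Summable fun k => A k ^ 2)
    (sB : Summable fun k => B k ^ 2) :
    (∀ k, Summable fun j => ((ω j + ω (k - j)) + ω k) * (A (k - j) * B j)) ∧
      (Summable fun k => (∑' j, ((ω j + ω (k - j)) + ω k) * (A (k - j) * B j)) ^ 2) ∧
      ∑' k, (∑' j, ((ω j + ω (k - j)) + ω k) * (A (k - j) * B j)) ^ 2 ≤
        10 * (∑' k, ω k ^ 2) * ((∑' k, A k ^ 2) * ∑' k, B k ^ 2) := by
  set S := ∑' k, ω k ^ 2 with hS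
  set X := ∑' k, A k ^ 2 with hX
  set Y := ∑' k, B k ^ 2 with hY
  obtain ⟨c1, c2, c3⟩ := tsum_conv (fun k => sq_nonneg (A k)) (fun k => sq_nonneg (B k)) sA sB
  have reflS {u : ℤ → ℝ} (k : ℤ) (h : Summable u) : Summable fun j => u (k - j) :=
    (Equiv.subLeft k).summable_iff.2 h
  have reflT (u : ℤ → ℝ) (k : ℤ) : ∑' j, u (k - j) = ∑' j, u j :=
    (Equiv.subLeft k).tsum_eq u
  have key : ∀ k, (Summable fun j => ((ω j + ω (k - j)) + ω k) * (A (k - j) * B j)) ∧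
      (∑' j, ((ω j + ω (k - j)) + ω k) * (A (k - j) * B j)) ^ 2 ≤
        8 * S * (∑' j, A (k - j) ^ 2 * B j ^ 2) + 2 * (X * Y) * ω k ^ 2 := by
    intro k
    have sum2 : Summable fun j => 2 * ω j ^ 2 + 2 * ω (k - j) ^ 2 :=
      (sω.mul_left 2).add ((reflS k sω).mul_left 2)
    have hle : ∀ j, (ω j + ω (k - j)) ^ 2 ≤ 2 * ω j ^ 2 + 2 * ω (k - j) ^ 2 := fun j => by
      nlinarith [sq_nonneg (ω j - ω (k - j))]
    have sw : Summable fun j => (ω j + ω (k - j)) ^ 2 :=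
      sum2.of_nonneg_of_le (fun j => sq_nonneg _) hle
    have tw : ∑' j, (ω j + ω (k - j)) ^ 2 ≤ 4 * S := by
      refine (sw.tsum_le_tsum hle sum2).trans_eq ?_
      rw [(sω.mul_left 2).tsum_add ((reflS k sω).mul_left 2), tsum_mul_left, tsum_mul_left,
        reflT (fun j => ω j ^ 2) k]
      ring
    have sAB : Summable fun j => (A (k - j) * B j) ^ 2 := by
      simpa only [mul_pow] using c1 k
    obtain ⟨d1, d2⟩ := cauchy_schwarz_tsum (fun j => add_nonneg (hω j) (hω (k - j)))
      (fun j => mul_nonneg (hA (k - j)) (hB j)) sw sAB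
    obtain ⟨e1, e2⟩ := cauchy_schwarz_tsum (fun j => hA (k - j)) hB (reflS k sA) sB
    rw [reflT (fun j => A j ^ 2) k] at e2
    simp only [add_mul _ (ω k)]
    refine ⟨d1.add (e1.mul_left _), ?_⟩
    rw [d1.tsum_add (e1.mul_left _), tsum_mul_left]
    simp only [mul_pow] at d2
    have hAB0 : 0 ≤ ∑' j, A (k - j) ^ 2 * B j ^ 2 := tsum_nonneg fun j => by positivity
    have f1 := d2.trans (mul_le_mul_of_nonneg_right tw hAB0)
    have f2 := mul_le_mul_of_nonneg_left e2 (sq_nonneg (ω k))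
    set P := ∑' j, (ω j + ω (k - j)) * (A (k - j) * B j)
    set Q := ∑' j, A (k - j) * B j
    nlinarith [sq_nonneg (P - ω k * Q)]
  have sR : Summable fun k =>
      8 * S * (∑' j, A (k - j) ^ 2 * B j ^ 2) + 2 * (X * Y) * ω k ^ 2 :=
    (c2.mul_left _).add (sω.mul_left _)
  have sL := sR.of_nonneg_of_le (fun k => sq_nonneg _) (fun k => (key k).2)
  refine ⟨fun k => (key k).1, sL, (sL.tsum_le_tsum (fun k => (key k).2) sR).trans_eq ?_⟩
  rw [(c2.mul_left _).tsum_add (sω.mul_left _), tsum_mul_left, tsum_mul_left, c3]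
  ring


theorem Jinv_product_Hs (s : ℝ) (hs : 1 / 2 < s) :
    ∃ C : ℝ, 0 < C ∧ ∀ f g : FSeq, InHs s f → InHs s g →
      hnorm s (Jpow (-1) (conv (Jpow 1 f) g)) ≤ C * hnorm s f * hnorm s g := by
  set c : ℝ := 2 ^ |s - 1| with hc
  have hc0 : 0 ≤ c := by positivity
  set S : ℝ := ∑' k : ℤ, (bracket k ^ (-s)) ^ 2 with hS
  have hS0 : 0 ≤ S := tsum_nonneg fun k => sq_nonneg _
  refine ⟨√(c ^ 2 * (10 * S) + 1), by positivity, fun f g hf hg => ?_⟩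
  have br0 : ∀ (k : ℤ) (t : ℝ), 0 < bracket k ^ t := fun k t =>
    Real.rpow_pos_of_pos (bracket_pos k) t
  have hsq : ∀ (a : FSeq) (k : ℤ),
      (1 + (k : ℝ) ^ 2) ^ s * ‖a k‖ ^ 2 = (bracket k ^ s * ‖a k‖) ^ 2 := fun a k => by
    rw [mul_pow, bracket_rpow_sq]
  have sA : Summable fun k : ℤ => (bracket k ^ s * ‖f k‖) ^ 2 := by
    simpa only [InHs, hsq] using hf
  have sB : Summable fun k : ℤ => (bracket k ^ s * ‖g k‖) ^ 2 := by
    simpa only [InHs, hsq] using hg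
  obtain ⟨h1, h2, h3⟩ := conv_bound (ω := fun k => bracket k ^ (-s)) (fun k => (br0 k _).le)
    (fun k => mul_nonneg (br0 k _).le (norm_nonneg (f k)))
    (fun k => mul_nonneg (br0 k _).le (norm_nonneg (g k))) (summable_bracket_rpow hs) sA sB
  have hterm : ∀ k j : ℤ, bracket k ^ (s - 1) * ‖Jpow 1 f (k - j) * g j‖ ≤
      c * (((bracket j ^ (-s) + bracket (k - j) ^ (-s)) + bracket k ^ (-s)) *
        ((bracket (k - j) ^ s * ‖f (k - j)‖) * (bracket j ^ s * ‖g j‖))) := by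
    intro k j
    have e1 : ‖Jpow 1 f (k - j)‖ = bracket (k - j) ^ (1 : ℝ) * ‖f (k - j)‖ := by
      rw [Jpow, norm_mul, bracket_rpow, Complex.norm_real, Real.norm_of_nonneg (by positivity)]
    have e2 : bracket (k - j) ^ (1 : ℝ) = bracket (k - j) ^ (1 - s) * bracket (k - j) ^ s := by
      rw [← Real.rpow_add (bracket_pos _)]; congr 1; ring
    have e3 : bracket j ^ (-s) * bracket j ^ s = 1 := by
      rw [← Real.rpow_add (bracket_pos _)]; simp
    have hp : 0 ≤ (bracket (k - j) ^ s * ‖f (k - j)‖) * (bracket j ^ s * ‖g j‖) :=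
      mul_nonneg (mul_nonneg (br0 _ _).le (norm_nonneg _))
        (mul_nonneg (br0 _ _).le (norm_nonneg _))
    rw [norm_mul, e1, e2, ← mul_assoc c]
    refine le_trans (le_of_eq ?_) (mul_le_mul_of_nonneg_right (weight_le hs k j) hp)
    linear_combination (-(bracket k ^ (s - 1) * bracket (k - j) ^ (1 - s) * bracket (k - j) ^ s *
      ‖f (k - j)‖ * ‖g j‖)) * e3
  have hcoef : ∀ k : ℤ, (1 + (k : ℝ) ^ 2) ^ s * ‖Jpow (-1) (conv (Jpow 1 f) g) k‖ ^ 2 ≤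
      c ^ 2 * (∑' j, ((bracket j ^ (-s) + bracket (k - j) ^ (-s)) + bracket k ^ (-s)) *
        ((bracket (k - j) ^ s * ‖f (k - j)‖) * (bracket j ^ s * ‖g j‖))) ^ 2 := by
    intro k
    have sN' : Summable fun j => bracket k ^ (s - 1) * ‖Jpow 1 f (k - j) * g j‖ :=
      ((h1 k).mul_left c).of_nonneg_of_le
        (fun j => mul_nonneg (br0 _ _).le (norm_nonneg _)) (hterm k)
    have sN : Summable fun j => ‖Jpow 1 f (k - j) * g j‖ :=
      (summable_mul_left_iff (br0 k (s - 1)).ne').1 sN'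
    have e1 : ‖Jpow (-1) (conv (Jpow 1 f) g) k‖ =
        bracket k ^ (-1 : ℝ) * ‖∑' j, Jpow 1 f (k - j) * g j‖ := by
      rw [Jpow, norm_mul, bracket_rpow, Complex.norm_real, Real.norm_of_nonneg (by positivity),
        conv]
    have e2 : bracket k ^ s * bracket k ^ (-1 : ℝ) = bracket k ^ (s - 1) := by
      rw [← Real.rpow_add (bracket_pos _)]; rfl
    rw [hsq, e1, ← mul_assoc, e2, ← mul_pow]
    refine pow_le_pow_left₀ (mul_nonneg (br0 _ _).le (norm_nonneg _)) ?_ 2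
    calc _ ≤ bracket k ^ (s - 1) * ∑' j, ‖Jpow 1 f (k - j) * g j‖ :=
          mul_le_mul_of_nonneg_left (norm_tsum_le_tsum_norm sN) (br0 _ _).le
      _ = ∑' j, bracket k ^ (s - 1) * ‖Jpow 1 f (k - j) * g j‖ := tsum_mul_left.symm
      _ ≤ _ := sN'.tsum_le_tsum (hterm k) ((h1 k).mul_left c)
      _ = _ := tsum_mul_left
  have sL := (h2.mul_left (c ^ 2)).of_nonneg_of_le (fun k => by positivity) hcoef
  have hT := sL.tsum_le_tsum hcoef (h2.mul_left (c ^ 2))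
  rw [tsum_mul_left] at hT
  simp only [hnorm]
  rw [← Real.sqrt_mul (by positivity), ← Real.sqrt_mul (by positivity)]
  refine Real.sqrt_le_sqrt ?_
  have hX : ∑' k : ℤ, (1 + (k : ℝ) ^ 2) ^ s * ‖f k‖ ^ 2 = ∑' k, (bracket k ^ s * ‖f k‖) ^ 2 :=
    tsum_congr (hsq f)
  have hY : ∑' k : ℤ, (1 + (k : ℝ) ^ 2) ^ s * ‖g k‖ ^ 2 = ∑' k, (bracket k ^ s * ‖g k‖) ^ 2 :=
    tsum_congr (hsq g)
  rw [hX, hY]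
  have hX0 : 0 ≤ ∑' k, (bracket k ^ s * ‖f k‖) ^ 2 := tsum_nonneg fun k => sq_nonneg _
  have hY0 : 0 ≤ ∑' k, (bracket k ^ s * ‖g k‖) ^ 2 := tsum_nonneg fun k => sq_nonneg _
  have hT2 := hT.trans (mul_le_mul_of_nonneg_left h3 (sq_nonneg c))
  set X := ∑' k, (bracket k ^ s * ‖f k‖) ^ 2
  set Y := ∑' k, (bracket k ^ s * ‖g k‖) ^ 2
  have hpi : 1 ≤ 2 * Real.pi := by linarith [Real.pi_gt_three]
  have hXY : 0 ≤ X * Y := mul_nonneg hX0 hY0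
  have hK : 0 ≤ c ^ 2 * (10 * S) := by positivity
  calc _ ≤ 2 * Real.pi * (c ^ 2 * (10 * S * (X * Y))) :=
        mul_le_mul_of_nonneg_left hT2 (by positivity)
    _ = (2 * Real.pi) * ((c ^ 2 * (10 * S)) * (X * Y)) * 1 := by ring
    _ ≤ (2 * Real.pi) * ((c ^ 2 * (10 * S) + 1) * (X * Y)) * (2 * Real.pi) := by
        gcongr
        linarith
    _ = _ := by ring


end
end

section
/- For all f,g∈H¹(𝕋): ‖J^{−1}(Jf·g)‖_{L²} ≤ C·min{‖f‖_{L²}‖g‖_{H¹}, ‖g‖_{L²}‖f‖_{H¹}}, where C is an absolute constant. -/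
/-!
Write `w k = (1 + k²)^{1/2}`, `F = |f̂|`, `G = |ĝ|` and `S = ∑ w⁻²`, a convergent series. The `k`-th
coefficient of `J⁻¹(Jf · g)` is at most `c k = w(k)⁻¹ ∑_j w(k-j) F(k-j) G(j)`, and both bounds come
from Cauchy–Schwarz in `j`.

* Bound by `‖g‖_{L²} ‖f‖_{H¹}`: Cauchy–Schwarz gives `c(k)² ≤ w(k)⁻² ‖wF‖² ‖G‖²` for every `k`;
  summing over `k` costs the factor `S` (this is the embedding `L¹ ⊂ H⁻¹`).
* Bound by `‖f‖_{L²} ‖g‖_{H¹}`: the triangle inequality `w(k-j) ≤ w(k) + w(j)` splits `c(k)` into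
  `∑_j F(k-j) G(j)` and `w(k)⁻¹ ∑_j F(k-j) w(j) G(j)`. The second term is treated as above. In the
  first one, writing `G = w⁻¹ · wG`, Cauchy–Schwarz gives the bound
  `S ∑_j F(k-j)² w(j)² G(j)²` for its square, and summing over `k` gives `S ‖F‖² ‖wG‖²`.

The sums are taken in `ℝ≥0∞`, where no summability has to be tracked, and the bounds
(`weighted_conv_right`, `weighted_conv_left`) are transferred to `hnorm` at the end.
-/

noncomputable section

open Complex MeasureTheory
open scoped BigOperators

open scoped ENNReal

/-! ### The weight -/

/-- The Japanese bracket `⟨k⟩ = (1+k²)^{1/2}`, as an extended nonnegative real. -/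
def wt (k : ℤ) : ℝ≥0∞ := ENNReal.ofReal ((1 + (k : ℝ) ^ 2) ^ ((1 : ℝ) / 2))

lemma wt_ne_top (k : ℤ) : wt k ≠ ∞ := ENNReal.ofReal_ne_top

lemma wt_ne_zero (k : ℤ) : wt k ≠ 0 := by
  have : 0 < (1 + (k : ℝ) ^ 2) ^ ((1 : ℝ) / 2) := by positivity
  simpa [wt] using this

lemma wt_sq (k : ℤ) : wt k ^ 2 = ENNReal.ofReal (1 + (k : ℝ) ^ 2) := by
  rw [wt, ← ENNReal.ofReal_pow (by positivity), ← Real.sqrt_eq_rpow,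
    Real.sq_sqrt (by positivity)]

lemma wt_sub_le (k j : ℤ) : wt (k - j) ≤ wt k + wt j := by
  unfold wt
  rw [← ENNReal.ofReal_add (by positivity) (by positivity)]
  apply ENNReal.ofReal_le_ofReal
  simp only [← Real.sqrt_eq_rpow]
  rw [Real.sqrt_le_left (by positivity)]
  have hk := Real.sq_sqrt (show 0 ≤ 1 + (k : ℝ) ^ 2 by positivity)
  have hj := Real.sq_sqrt (show 0 ≤ 1 + (j : ℝ) ^ 2 by positivity)
  have h : -((k : ℝ) * j) ≤ √(1 + (k : ℝ) ^ 2) * √(1 + (j : ℝ) ^ 2) := by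
    rw [← Real.sqrt_mul (by positivity)]
    apply Real.le_sqrt_of_sq_le
    nlinarith [sq_nonneg (k : ℝ), sq_nonneg (j : ℝ)]
  push_cast
  nlinarith

/-- The constant `S = ∑_k ⟨k⟩⁻²`. -/
def wtSum : ℝ≥0∞ := ∑' k : ℤ, (wt k)⁻¹ ^ 2

lemma wtSum_ne_top : wtSum ≠ ∞ := by
  have hs : Summable fun k : ℤ => (1 + (k : ℝ) ^ 2)⁻¹ := by
    -- The comparison with `1 / k ^ 2` fails at `k = 0`, where the latter is `0`.
    refine Summable.of_norm_bounded_eventually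
      (g := fun k : ℤ => 1 / (k : ℝ) ^ 2) (Real.summable_one_div_int_pow.mpr one_lt_two) ?_
    refine (Set.finite_singleton (0 : ℤ)).subset fun k hk => ?_
    by_contra h0
    apply hk
    have : (k : ℝ) ≠ 0 := by exact_mod_cast h0
    show ‖(1 + (k : ℝ) ^ 2)⁻¹‖ ≤ 1 / (k : ℝ) ^ 2
    rw [Real.norm_of_nonneg (by positivity), one_div]
    exact inv_anti₀ (by positivity) (by linarith)
  have he : wtSum = ∑' k : ℤ, ENNReal.ofReal ((1 + (k : ℝ) ^ 2)⁻¹) := by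
    refine tsum_congr fun k => ?_
    rw [← ENNReal.inv_pow, wt_sq, ENNReal.ofReal_inv_of_pos (by positivity)]
  rw [he]
  exact hs.tsum_ofReal_ne_top

/-! ### Bounds for the weighted convolution -/

lemma tsum_mul_sq_le (u v : ℤ → ℝ≥0∞) :
    (∑' j, u j * v j) ^ 2 ≤ (∑' j, u j ^ 2) * ∑' j, v j ^ 2 := by
  have h := ENNReal.lintegral_mul_le_Lp_mul_Lq (Measure.count : Measure ℤ)
    Real.HolderConjugate.two_two (f := u) (g := v)
    (measurable_of_countable u).aemeasurable (measurable_of_countable v).aemeasurable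
  simp only [lintegral_count, Pi.mul_apply, ENNReal.rpow_two] at h
  calc (∑' j, u j * v j) ^ 2
      ≤ ((∑' j, u j ^ 2) ^ ((1 : ℝ) / 2) * (∑' j, v j ^ 2) ^ ((1 : ℝ) / 2)) ^ 2 := by gcongr
    _ = _ := by
      rw [mul_pow, ← ENNReal.rpow_two, ← ENNReal.rpow_two, ← ENNReal.rpow_mul,
        ← ENNReal.rpow_mul]
      norm_num

lemma tsum_sub_left (k : ℤ) (u : ℤ → ℝ≥0∞) : ∑' j, u (k - j) = ∑' j, u j :=
  (Equiv.subLeft k).tsum_eq u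

lemma tsum_sub_right (j : ℤ) (u : ℤ → ℝ≥0∞) : ∑' k, u (k - j) = ∑' k, u k :=
  (Equiv.subRight j).tsum_eq u

/-- The quantitative form of `ℓ² * ℓ² ⊂ ℓ^∞` followed by multiplication with `⟨k⟩⁻¹ ∈ ℓ²`. -/
lemma weighted_conv_basic (u v : ℤ → ℝ≥0∞) :
    ∑' k, ((wt k)⁻¹ * ∑' j, u (k - j) * v j) ^ 2
      ≤ wtSum * ((∑' k, u k ^ 2) * ∑' k, v k ^ 2) := by
  rw [wtSum, ← ENNReal.tsum_mul_right]
  refine ENNReal.tsum_le_tsum fun k => ?_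
  rw [mul_pow]
  gcongr
  refine (tsum_mul_sq_le (fun j => u (k - j)) v).trans_eq ?_
  rw [tsum_sub_left k (fun j => u j ^ 2)]

/-- `H¹ ⊂ ℓ¹` on the Fourier side combined with Young's inequality `ℓ² * ℓ¹ ⊂ ℓ²`. -/
lemma conv_young (F G : ℤ → ℝ≥0∞) :
    ∑' k, (∑' j, F (k - j) * G j) ^ 2
      ≤ wtSum * ((∑' k, F k ^ 2) * ∑' k, (wt k * G k) ^ 2) := by
  calc ∑' k, (∑' j, F (k - j) * G j) ^ 2
      ≤ ∑' k, wtSum * ∑' j, (F (k - j) * (wt j * G j)) ^ 2 := by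
        refine ENNReal.tsum_le_tsum fun k => ?_
        refine le_trans (le_of_eq ?_)
          (tsum_mul_sq_le (fun j => (wt j)⁻¹) fun j => F (k - j) * (wt j * G j))
        congr 1
        refine tsum_congr fun j => ?_
        calc F (k - j) * G j = ((wt j)⁻¹ * wt j) * (F (k - j) * G j) := by
              rw [ENNReal.inv_mul_cancel (wt_ne_zero j) (wt_ne_top j), one_mul]
          _ = _ := by ring
    _ = wtSum * ∑' j, ∑' k, F (k - j) ^ 2 * (wt j * G j) ^ 2 := by
        rw [ENNReal.tsum_mul_left, ENNReal.tsum_comm]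
        simp only [mul_pow]
    _ = _ := by
        congr 1
        simp only [ENNReal.tsum_mul_right]
        rw [← ENNReal.tsum_mul_left]
        refine tsum_congr fun j => ?_
        rw [tsum_sub_right j (fun k => F k ^ 2)]

lemma ennreal_add_sq_le (a b : ℝ≥0∞) : (a + b) ^ 2 ≤ 2 * (a ^ 2 + b ^ 2) := by
  have h := ENNReal.rpow_add_le_mul_rpow_add_rpow a b (p := 2) (by norm_num)
  norm_num at h
  exact h

/-- The bound in which the left factor carries the `H¹` norm. -/
lemma weighted_conv_left (F G : ℤ → ℝ≥0∞) :
    ∑' k, ((wt k)⁻¹ * ∑' j, wt (k - j) * F (k - j) * G j) ^ 2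
      ≤ 4 * wtSum * ((∑' k, G k ^ 2) * ∑' k, (wt k * F k) ^ 2) := by
  refine (weighted_conv_basic (fun k => wt k * F k) G).trans ?_
  rw [mul_comm (∑' k, G k ^ 2)]
  gcongr
  exact le_mul_of_one_le_left zero_le (by norm_num)

/-- The bound in which the right factor carries the `H¹` norm. -/
lemma weighted_conv_right (F G : ℤ → ℝ≥0∞) :
    ∑' k, ((wt k)⁻¹ * ∑' j, wt (k - j) * F (k - j) * G j) ^ 2
      ≤ 4 * wtSum * ((∑' k, F k ^ 2) * ∑' k, (wt k * G k) ^ 2) := by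
  have hsplit : ∀ k, (wt k)⁻¹ * ∑' j, wt (k - j) * F (k - j) * G j
      ≤ ∑' j, F (k - j) * G j + (wt k)⁻¹ * ∑' j, F (k - j) * (wt j * G j) := by
    intro k
    calc (wt k)⁻¹ * ∑' j, wt (k - j) * F (k - j) * G j
        ≤ (wt k)⁻¹ * ∑' j, (wt k * (F (k - j) * G j) + F (k - j) * (wt j * G j)) := by
          gcongr with j
          calc wt (k - j) * F (k - j) * G j ≤ (wt k + wt j) * F (k - j) * G j := by
                gcongr
                exact wt_sub_le k j
            _ = _ := by ring
      _ = _ := by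
          rw [ENNReal.tsum_add, ENNReal.tsum_mul_left, mul_add, ← mul_assoc,
            ENNReal.inv_mul_cancel (wt_ne_zero k) (wt_ne_top k), one_mul]
  calc ∑' k, ((wt k)⁻¹ * ∑' j, wt (k - j) * F (k - j) * G j) ^ 2
      ≤ ∑' k, 2 * ((∑' j, F (k - j) * G j) ^ 2
          + ((wt k)⁻¹ * ∑' j, F (k - j) * (wt j * G j)) ^ 2) := by
        refine ENNReal.tsum_le_tsum fun k => ?_
        exact (pow_le_pow_left' (hsplit k) 2).trans (ennreal_add_sq_le _ _)
    _ ≤ 2 * (wtSum * ((∑' k, F k ^ 2) * ∑' k, (wt k * G k) ^ 2)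
          + wtSum * ((∑' k, F k ^ 2) * ∑' k, (wt k * G k) ^ 2)) := by
        rw [ENNReal.tsum_mul_left, ENNReal.tsum_add]
        gcongr
        · exact conv_young F G
        · exact weighted_conv_basic F fun j => wt j * G j
    _ = _ := by ring

/-! ### Transfer to the Sobolev norms -/

/-- The sum defining `hnorm s a`, with values in `ℝ≥0∞`, so that it is `∞` rather than `0` when the
series diverges. -/
def energy (s : ℝ) (a : FSeq) : ℝ≥0∞ :=
  ∑' k : ℤ, ENNReal.ofReal ((1 + (k : ℝ) ^ 2) ^ s * ‖a k‖ ^ 2)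

lemma hnorm_eq (s : ℝ) (a : FSeq) :
    hnorm s a = Real.sqrt (2 * Real.pi * (energy s a).toReal) := by
  rw [hnorm, energy, ENNReal.tsum_toReal_eq fun _ => ENNReal.ofReal_ne_top]
  congr 2
  refine tsum_congr fun k => ?_
  rw [ENNReal.toReal_ofReal (by positivity)]

lemma energy_ne_top {s : ℝ} {a : FSeq} (h : InHs s a) : energy s a ≠ ∞ :=
  h.tsum_ofReal_ne_top

lemma InHs.zero_of_one {a : FSeq} (h : InHs 1 a) : InHs 0 a := by
  refine Summable.of_nonneg_of_le (fun k => by positivity) (fun k => ?_) h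
  gcongr
  · nlinarith [sq_nonneg (k : ℝ)]
  · norm_num

lemma energy_zero (a : FSeq) : energy 0 a = ∑' k, ‖a k‖ₑ ^ 2 := by
  refine tsum_congr fun k => ?_
  rw [Real.rpow_zero, one_mul, ENNReal.ofReal_pow (norm_nonneg _), ofReal_norm]

lemma energy_one (a : FSeq) : energy 1 a = ∑' k, (wt k * ‖a k‖ₑ) ^ 2 := by
  refine tsum_congr fun k => ?_
  rw [Real.rpow_one, ENNReal.ofReal_mul (by positivity), ENNReal.ofReal_pow (norm_nonneg _),
    ofReal_norm, mul_pow, wt_sq]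

lemma enorm_Jpow_one (a : FSeq) (k : ℤ) : ‖Jpow 1 a k‖ₑ = wt k * ‖a k‖ₑ := by
  rw [Jpow, enorm_mul, wt, ← ofReal_norm (E := ℂ) (Complex.ofReal _), Complex.norm_real,
    Real.norm_of_nonneg (by positivity)]

lemma enorm_Jpow_neg_one (a : FSeq) (k : ℤ) : ‖Jpow (-1) a k‖ₑ = (wt k)⁻¹ * ‖a k‖ₑ := by
  rw [Jpow, enorm_mul, wt, ← ofReal_norm (E := ℂ) (Complex.ofReal _), Complex.norm_real,
    Real.norm_of_nonneg (by positivity), ← ENNReal.ofReal_inv_of_pos (by positivity),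
    ← Real.rpow_neg (by positivity), neg_div]

lemma energy_product_le (f g : FSeq) :
    energy 0 (Jpow (-1) (conv (Jpow 1 f) g))
      ≤ ∑' k, ((wt k)⁻¹ * ∑' j, wt (k - j) * ‖f (k - j)‖ₑ * ‖g j‖ₑ) ^ 2 := by
  rw [energy_zero]
  refine ENNReal.tsum_le_tsum fun k => ?_
  rw [enorm_Jpow_neg_one]
  gcongr
  refine enorm_tsum_le_tsum_enorm.trans_eq (tsum_congr fun j => ?_)
  rw [enorm_mul, enorm_Jpow_one]

/-- Passage from a bound on `energy` to a bound on `hnorm`. -/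
lemma hnorm_le_of_energy_le {h a b : FSeq} {s t : ℝ} (ha : energy s a ≠ ∞)
    (hb : energy t b ≠ ∞) (hle : energy 0 h ≤ 4 * wtSum * (energy s a * energy t b)) :
    hnorm 0 h ≤ Real.sqrt (4 * wtSum.toReal + 1) * (hnorm s a * hnorm t b) := by
  have hreal := ENNReal.toReal_mono (ENNReal.mul_ne_top
    (ENNReal.mul_ne_top ENNReal.ofNat_ne_top wtSum_ne_top) (ENNReal.mul_ne_top ha hb)) hle
  simp only [ENNReal.toReal_mul, ENNReal.toReal_ofNat] at hreal
  rw [hnorm_eq, hnorm_eq, hnorm_eq, ← Real.sqrt_mul (by positivity),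
    ← Real.sqrt_mul (by positivity)]
  apply Real.sqrt_le_sqrt
  have hx : 0 ≤ (energy s a).toReal * (energy t b).toReal := by positivity
  have hS : 0 ≤ wtSum.toReal := ENNReal.toReal_nonneg
  have hpi : 1 ≤ 2 * Real.pi := by linarith [Real.pi_gt_three]
  generalize (energy s a).toReal = x at *
  generalize (energy t b).toReal = y at *
  calc 2 * Real.pi * (energy 0 h).toReal
      ≤ 2 * Real.pi * ((4 * wtSum.toReal + 1) * (x * y)) := by
        gcongr
        nlinarith
    _ ≤ 2 * Real.pi * (2 * Real.pi * ((4 * wtSum.toReal + 1) * (x * y))) := by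
        refine mul_le_mul_of_nonneg_left ?_ (by positivity)
        exact le_mul_of_one_le_left (by positivity) hpi
    _ = _ := by ring

theorem Jinv_product_L2 :
    ∃ C : ℝ, 0 < C ∧ ∀ f g : FSeq, InHs 1 f → InHs 1 g →
      hnorm 0 (Jpow (-1) (conv (Jpow 1 f) g)) ≤
        C * min (hnorm 0 f * hnorm 1 g) (hnorm 0 g * hnorm 1 f) := by
  refine ⟨Real.sqrt (4 * wtSum.toReal + 1), by positivity, fun f g hf hg => ?_⟩
  rw [mul_min_of_nonneg _ _ (Real.sqrt_nonneg _)]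
  refine le_min ?_ ?_
  · refine hnorm_le_of_energy_le (energy_ne_top hf.zero_of_one) (energy_ne_top hg) ?_
    rw [energy_zero f, energy_one g]
    exact (energy_product_le f g).trans (weighted_conv_right (‖f ·‖ₑ) (‖g ·‖ₑ))
  · refine hnorm_le_of_energy_le (energy_ne_top hg.zero_of_one) (energy_ne_top hf) ?_
    rw [energy_zero g, energy_one f]
    exact (energy_product_le f g).trans (weighted_conv_left (‖f ·‖ₑ) (‖g ·‖ₑ))

end
end

section
/- Let s>1/2. For all f,g∈H^s(𝕋) and h∈L²(𝕋): ∑_{k≠0} ∑_{k₁+k₂=k, |k₁|>10|k|} |k|^{s−1}|k₁| |f̂_{k₁}| |ĝ_{k₂}| |ĥ_k| ≤ C‖f‖_{H^s}‖g‖_{H^s}‖h‖_{L²}, where the constant C depends only on s. -/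
/-!
In the region `|k₁| > 10|k|` the frequency `k₂ = k - k₁` satisfies `|k₂| ≥ |k₁| / 2`. Since `2s - 1 > 0`,
this gives the pointwise bound `|k|^(s-1) |k₁| ≤ 2^s |k|^(-s) ⟨k₁⟩^s ⟨k₂⟩^s` (`weight_bound`), where
`⟨m⟩ = (1 + m²)^(1/2)`. Cauchy–Schwarz in `k₁` then bounds the inner sum by
`2^s |k|^(-s) |ĥ_k| ‖f‖_{H^s} ‖g‖_{H^s}`, and Cauchy–Schwarz in `k`, with `∑ |k|^(-2s) < ∞` because
`2s > 1`, bounds the outer sum.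
-/


noncomputable section

open Complex MeasureTheory
open scoped BigOperators

/-- Cauchy–Schwarz for nonnegative square-summable families on `ℤ`, including summability of the product. -/
theorem cauchy_schwarz_tsum_s5 (u v : ℤ → ℝ) (hu : ∀ k, 0 ≤ u k) (hv : ∀ k, 0 ≤ v k)
    (hu2 : Summable fun k => u k ^ 2) (hv2 : Summable fun k => v k ^ 2) :
    (Summable fun k => u k * v k) ∧
      ∑' k, u k * v k ≤ Real.sqrt (∑' k, u k ^ 2) * Real.sqrt (∑' k, v k ^ 2) := by
  have h := Real.inner_le_Lp_mul_Lq_tsum_of_nonneg Real.HolderConjugate.two_two hu hv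
    (by simpa using hu2) (by simpa using hv2)
  have hsum := Real.summable_mul_of_Lp_Lq_of_nonneg Real.HolderConjugate.two_two hu hv
    (by simpa using hu2) (by simpa using hv2)
  exact ⟨hsum, by simpa [Real.sqrt_eq_rpow] using h⟩

theorem abs_rpow_le_weight (s : ℝ) (hs : 0 < s) (m : ℤ) :
    |(m : ℝ)| ^ s ≤ (1 + (m : ℝ) ^ 2) ^ (s / 2) := by
  have h1 : |(m : ℝ)| ^ s = ((m : ℝ) ^ 2) ^ (s / 2) := by
    rw [← sq_abs, ← Real.rpow_natCast, ← Real.rpow_mul (abs_nonneg _)]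
    congr 1
    push_cast
    ring
  rw [h1]
  gcongr
  linarith

theorem weight_bound (s : ℝ) (hs : 1 / 2 < s) (k k₁ : ℤ) (hk : k ≠ 0) (hkk : 10 * |k| < |k₁|) :
    |(k : ℝ)| ^ (s - 1) * |(k₁ : ℝ)| ≤
      2 ^ s * |(k : ℝ)| ^ (-s) *
        ((1 + (k₁ : ℝ) ^ 2) ^ (s / 2) * (1 + ((k - k₁ : ℤ) : ℝ) ^ 2) ^ (s / 2)) := by
  have hs0 : 0 < s := by linarith
  have hkpos : 0 < |(k : ℝ)| := by positivity
  have hR : 10 * |(k : ℝ)| < |(k₁ : ℝ)| := by exact_mod_cast hkk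
  have hk1pos : 0 < |(k₁ : ℝ)| := by linarith
  have hdiff : |(k₁ : ℝ)| ≤ 2 * |((k - k₁ : ℤ) : ℝ)| := by
    have h := abs_sub_abs_le_abs_sub (k₁ : ℝ) (k : ℝ)
    rw [abs_sub_comm] at h
    push_cast
    linarith
  have hA := abs_rpow_le_weight s hs0 k₁
  have hB : |(k₁ : ℝ)| ^ s ≤ 2 ^ s * (1 + ((k - k₁ : ℤ) : ℝ) ^ 2) ^ (s / 2) := by
    calc |(k₁ : ℝ)| ^ s ≤ (2 * |((k - k₁ : ℤ) : ℝ)|) ^ s := by gcongr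
      _ = 2 ^ s * |((k - k₁ : ℤ) : ℝ)| ^ s := Real.mul_rpow (by norm_num) (abs_nonneg _)
      _ ≤ _ := by gcongr; exact abs_rpow_le_weight s hs0 _
  have hC : |(k : ℝ)| ^ (2 * s - 1) ≤ |(k₁ : ℝ)| ^ (2 * s - 1) :=
    Real.rpow_le_rpow hkpos.le (by linarith) (by linarith)
  calc |(k : ℝ)| ^ (s - 1) * |(k₁ : ℝ)|
      = |(k : ℝ)| ^ (-s) * (|(k : ℝ)| ^ (2 * s - 1) * |(k₁ : ℝ)|) := by
        rw [← mul_assoc, ← Real.rpow_add hkpos]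
        ring_nf
    _ ≤ |(k : ℝ)| ^ (-s) * (|(k₁ : ℝ)| ^ (2 * s - 1) * |(k₁ : ℝ)|) := by gcongr
    _ = |(k : ℝ)| ^ (-s) * (|(k₁ : ℝ)| ^ s * |(k₁ : ℝ)| ^ s) := by
        rw [← Real.rpow_add_one hk1pos.ne', ← Real.rpow_add hk1pos]
        ring_nf
    _ ≤ |(k : ℝ)| ^ (-s) * ((1 + (k₁ : ℝ) ^ 2) ^ (s / 2) *
          (2 ^ s * (1 + ((k - k₁ : ℤ) : ℝ) ^ 2) ^ (s / 2))) := by gcongr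
    _ = _ := by ring

theorem weighted_sq (s : ℝ) (a : FSeq) (k : ℤ) :
    ((1 + (k : ℝ) ^ 2) ^ (s / 2) * ‖a k‖) ^ 2 = (1 + (k : ℝ) ^ 2) ^ s * ‖a k‖ ^ 2 := by
  rw [mul_pow, ← Real.rpow_natCast, ← Real.rpow_mul (by positivity)]
  congr 2
  push_cast
  ring

theorem sqrt_tsum_le_hnorm (s : ℝ) (a : FSeq) :
    Real.sqrt (∑' k : ℤ, (1 + (k : ℝ) ^ 2) ^ s * ‖a k‖ ^ 2) ≤ hnorm s a := by
  apply Real.sqrt_le_sqrt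
  apply le_mul_of_one_le_left
  · exact tsum_nonneg fun k => by positivity
  · linarith [Real.pi_gt_three]

/-- Bound on the inner sum for fixed `k`. At `k = 0` the left side vanishes. -/
theorem inner_sum_bound (s : ℝ) (hs : 1 / 2 < s) (f g h : FSeq) (hf : InHs s f) (hg : InHs s g)
    (k : ℤ) :
    ∑' k₁ : ℤ,
        (if k ≠ 0 ∧ 10 * |k| < |k₁| then
          (|(k : ℝ)|) ^ (s - 1) * |(k₁ : ℝ)| * ‖f k₁‖ * ‖g (k - k₁)‖ * ‖h k‖ else 0)
      ≤ 2 ^ s * hnorm s f * hnorm s g * (|(k : ℝ)| ^ (-s) * ‖h k‖) := by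
  let F : ℤ → ℝ := fun m => (1 + (m : ℝ) ^ 2) ^ (s / 2) * ‖f m‖
  let G : ℤ → ℝ := fun m => (1 + (m : ℝ) ^ 2) ^ (s / 2) * ‖g m‖
  have hF2 : (fun m => F m ^ 2) = fun m : ℤ => (1 + (m : ℝ) ^ 2) ^ s * ‖f m‖ ^ 2 :=
    funext fun m => weighted_sq s f m
  have hG2 : (fun m => G m ^ 2) = fun m : ℤ => (1 + (m : ℝ) ^ 2) ^ s * ‖g m‖ ^ 2 :=
    funext fun m => weighted_sq s g m
  have hFs : Summable fun m => F m ^ 2 := by rw [hF2]; exact hf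
  have hGs : Summable fun m => G m ^ 2 := by rw [hG2]; exact hg
  obtain ⟨hsum, hle⟩ := cauchy_schwarz_tsum_s5 F (fun m => G (k - m))
    (fun m => by positivity) (fun m => by positivity) hFs
    ((Equiv.subLeft k).summable_iff.mpr hGs)
  have hreflect : ∑' m, G (k - m) ^ 2 = ∑' m, G m ^ 2 :=
    (Equiv.subLeft k).tsum_eq fun m => G m ^ 2
  rw [hreflect, hF2, hG2] at hle
  have hFG : ∑' m, F m * G (k - m) ≤ hnorm s f * hnorm s g :=
    hle.trans (mul_le_mul (sqrt_tsum_le_hnorm s f) (sqrt_tsum_le_hnorm s g)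
      (Real.sqrt_nonneg _) (Real.sqrt_nonneg _))
  let c : ℝ := 2 ^ s * |(k : ℝ)| ^ (-s) * ‖h k‖
  have hc : 0 ≤ c := by positivity
  have hpt : ∀ k₁ : ℤ, (if k ≠ 0 ∧ 10 * |k| < |k₁| then
      (|(k : ℝ)|) ^ (s - 1) * |(k₁ : ℝ)| * ‖f k₁‖ * ‖g (k - k₁)‖ * ‖h k‖ else 0)
      ≤ c * (F k₁ * G (k - k₁)) := by
    intro k₁
    split_ifs with hcond
    · calc (|(k : ℝ)|) ^ (s - 1) * |(k₁ : ℝ)| * ‖f k₁‖ * ‖g (k - k₁)‖ * ‖h k‖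
          ≤ (2 ^ s * |(k : ℝ)| ^ (-s) *
            ((1 + (k₁ : ℝ) ^ 2) ^ (s / 2) * (1 + ((k - k₁ : ℤ) : ℝ) ^ 2) ^ (s / 2))) *
            ‖f k₁‖ * ‖g (k - k₁)‖ * ‖h k‖ := by
            gcongr ?_ * ‖f k₁‖ * ‖g (k - k₁)‖ * ‖h k‖
            exact weight_bound s hs k k₁ hcond.1 hcond.2
        _ = c * (F k₁ * G (k - k₁)) := by
            simp only [c, F, G]
            ring
    · positivity
  have hdom : Summable fun m => c * (F m * G (k - m)) := hsum.mul_left c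
  calc _ ≤ ∑' m, c * (F m * G (k - m)) :=
        (Summable.of_nonneg_of_le (fun m => by split_ifs <;> positivity) hpt hdom).tsum_le_tsum
          hpt hdom
    _ = c * ∑' m, F m * G (k - m) := tsum_mul_left
    _ ≤ c * (hnorm s f * hnorm s g) := by gcongr
    _ = _ := by simp only [c]; ring

theorem high_freq_sum_Hs (s : ℝ) (hs : 1 / 2 < s) :
    ∃ C : ℝ, 0 < C ∧ ∀ f g h : FSeq, InHs s f → InHs s g → InHs 0 h →
      ∑' k : ℤ, ∑' k₁ : ℤ,
        (if k ≠ 0 ∧ 10 * |k| < |k₁| then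
          (|(k : ℝ)|) ^ (s - 1) * |(k₁ : ℝ)| * ‖f k₁‖ * ‖g (k - k₁)‖ * ‖h k‖ else 0)
      ≤ C * hnorm s f * hnorm s g * hnorm 0 h := by
  have hpow : (fun k : ℤ => (|(k : ℝ)| ^ (-s)) ^ 2) = fun k : ℤ => |(k : ℝ)| ^ (-(2 * s)) := by
    funext k
    rw [← Real.rpow_natCast, ← Real.rpow_mul (abs_nonneg _)]
    congr 1
    push_cast
    ring
  have hpows : Summable fun k : ℤ => (|(k : ℝ)| ^ (-s)) ^ 2 := by
    rw [hpow]
    exact Real.summable_abs_int_rpow (by linarith)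
  let D : ℝ := Real.sqrt (∑' k : ℤ, (|(k : ℝ)| ^ (-s)) ^ 2)
  have hD : 0 ≤ D := Real.sqrt_nonneg _
  -- `D + 1` rather than `D`, so that positivity of the constant is immediate.
  refine ⟨2 ^ s * (D + 1), by positivity, fun f g h hf hg hh => ?_⟩
  have hf0 : 0 ≤ hnorm s f := Real.sqrt_nonneg _
  have hg0 : 0 ≤ hnorm s g := Real.sqrt_nonneg _
  have hh0 : 0 ≤ hnorm 0 h := Real.sqrt_nonneg _
  have hh2 : (fun k : ℤ => (1 + (k : ℝ) ^ 2) ^ (0 : ℝ) * ‖h k‖ ^ 2) = fun k => ‖h k‖ ^ 2 := by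
    funext k
    rw [Real.rpow_zero, one_mul]
  have hhs : Summable fun k => ‖h k‖ ^ 2 := by rw [← hh2]; exact hh
  have hhle : Real.sqrt (∑' k, ‖h k‖ ^ 2) ≤ hnorm 0 h := by
    rw [← hh2]
    exact sqrt_tsum_le_hnorm 0 h
  obtain ⟨hsum, hle⟩ := cauchy_schwarz_tsum_s5 (fun k : ℤ => |(k : ℝ)| ^ (-s)) (fun k => ‖h k‖)
    (fun k => by positivity) (fun k => by positivity) hpows hhs
  have hdom := hsum.mul_left (2 ^ s * hnorm s f * hnorm s g)
  have hpt := inner_sum_bound s hs f g h hf hg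
  calc _ ≤ ∑' k : ℤ, 2 ^ s * hnorm s f * hnorm s g * (|(k : ℝ)| ^ (-s) * ‖h k‖) :=
        (Summable.of_nonneg_of_le
          (fun k => tsum_nonneg fun m => by split_ifs <;> positivity) hpt hdom).tsum_le_tsum
          hpt hdom
    _ = 2 ^ s * hnorm s f * hnorm s g * ∑' k : ℤ, |(k : ℝ)| ^ (-s) * ‖h k‖ := tsum_mul_left
    _ ≤ 2 ^ s * hnorm s f * hnorm s g * ((D + 1) * hnorm 0 h) := by
        gcongr
        exact hle.trans (mul_le_mul (by simp only [D]; linarith) hhle (Real.sqrt_nonneg _)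
          (by positivity))
    _ = _ := by ring

end
end

section
/- For all f∈L²(𝕋), g∈H¹(𝕋) and h∈L²(𝕋): ∑_{k≠0} ∑_{k₁+k₂=k, |k₁|>10|k|} |k|^{−1}|k₁| |f̂_{k₁}| |ĝ_{k₂}| |ĥ_k| ≤ C‖f‖_{L²}‖g‖_{H¹}‖h‖_{L²}, where C is an absolute constant. -/
/-!
On the region `10 * |k| < |k₁|` the frequency `k₂ = k - k₁` satisfies `|k₁| ≤ 2 * |k₂|`, so the
derivative weight `|k₁|` can be moved onto `g`. Cauchy–Schwarz in `k₁` (`tsum_mul_le_sqrt`) then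
bounds the inner sum by `2 * |k|⁻¹ * |ĥ_k|` times the `ℓ²` norms of `f̂` and `√(1 + m²) * ĝ_m`,
uniformly in `k`. A second Cauchy–Schwarz in `k`, using `∑ |k|⁻² < ∞`, finishes the estimate.
-/

noncomputable section

open Complex MeasureTheory
open scoped BigOperators

/-- Cauchy–Schwarz in `ℓ²(ℤ)` for nonnegative sequences, including summability of the product. -/
lemma tsum_mul_le_sqrt {a b : ℤ → ℝ} (ha : ∀ k, 0 ≤ a k) (hb : ∀ k, 0 ≤ b k)
    (hA : Summable fun k => a k ^ 2) (hB : Summable fun k => b k ^ 2) :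
    (Summable fun k => a k * b k) ∧
      ∑' k, a k * b k ≤ Real.sqrt (∑' k, a k ^ 2) * Real.sqrt (∑' k, b k ^ 2) := by
  have hs := Real.summable_mul_of_Lp_Lq_of_nonneg (p := 2) (q := 2)
    Real.HolderConjugate.two_two ha hb (by simpa using hA) (by simpa using hB)
  have h := Real.inner_le_Lp_mul_Lq_tsum_of_nonneg (p := 2) (q := 2)
    Real.HolderConjugate.two_two ha hb (by simpa using hA) (by simpa using hB)
  exact ⟨hs, by simpa [Real.sqrt_eq_rpow] using h⟩

lemma abs_le_two_mul_sqrt {k k₁ : ℤ} (h : 10 * |k| < |k₁|) :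
    |(k₁ : ℝ)| ≤ 2 * Real.sqrt (1 + ((k - k₁ : ℤ) : ℝ) ^ 2) := by
  have h1 : |k₁| ≤ 2 * |k - k₁| := by
    have := abs_sub_abs_le_abs_sub k₁ k
    rw [abs_sub_comm k₁ k] at this
    have := abs_nonneg k
    omega
  have h2 : |(k₁ : ℝ)| ≤ 2 * |((k - k₁ : ℤ) : ℝ)| := by exact_mod_cast h1
  have h3 : |((k - k₁ : ℤ) : ℝ)| ≤ Real.sqrt (1 + ((k - k₁ : ℤ) : ℝ) ^ 2) :=
    Real.abs_le_sqrt (by linarith)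
  linarith

lemma summable_inv_abs_sq : Summable fun k : ℤ => ((|(k : ℝ)|)⁻¹) ^ 2 := by
  have h := (Real.summable_one_div_int_pow (p := 2)).2 (by norm_num)
  simpa using h

lemma le_two_pi_mul {x : ℝ} (hx : 0 ≤ x) : x ≤ 2 * Real.pi * x := by
  nlinarith [Real.pi_gt_three]

theorem high_freq_sum_L2_H1 :
    ∃ C : ℝ, 0 < C ∧ ∀ f g h : FSeq, InHs 0 f → InHs 1 g → InHs 0 h →
      ∑' k : ℤ, ∑' k₁ : ℤ,
        (if k ≠ 0 ∧ 10 * |k| < |k₁| then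
          (|(k : ℝ)|)⁻¹ * |(k₁ : ℝ)| * ‖f k₁‖ * ‖g (k - k₁)‖ * ‖h k‖ else 0)
      ≤ C * hnorm 0 f * hnorm 1 g * hnorm 0 h := by
  have hS : 0 ≤ Real.sqrt (∑' k : ℤ, ((|(k : ℝ)|)⁻¹) ^ 2) := Real.sqrt_nonneg _
  -- The added `1` only serves to make positivity of the constant immediate.
  refine ⟨2 * Real.sqrt (∑' k : ℤ, ((|(k : ℝ)|)⁻¹) ^ 2) + 1, by positivity, ?_⟩
  intro f g h hf hg hh
  set S := Real.sqrt (∑' k : ℤ, ((|(k : ℝ)|)⁻¹) ^ 2) with hSdef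
  simp only [InHs, Real.rpow_zero, Real.rpow_one, one_mul] at hf hg hh
  simp only [hnorm, Real.rpow_zero, Real.rpow_one, one_mul]
  set A := ∑' k : ℤ, ‖f k‖ ^ 2 with hA
  set B := ∑' k : ℤ, (1 + (k : ℝ) ^ 2) * ‖g k‖ ^ 2 with hB
  set D := ∑' k : ℤ, ‖h k‖ ^ 2 with hD
  have hA0 : 0 ≤ A := tsum_nonneg fun k => by positivity
  have hB0 : 0 ≤ B := tsum_nonneg fun k => by positivity
  have hD0 : 0 ≤ D := tsum_nonneg fun k => by positivity
  let G : ℤ → ℝ := fun m => Real.sqrt (1 + (m : ℝ) ^ 2) * ‖g m‖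
  have hG0 : ∀ m, 0 ≤ G m := fun m => by positivity
  have hGsq : ∀ m, G m ^ 2 = (1 + (m : ℝ) ^ 2) * ‖g m‖ ^ 2 := fun m => by
    simp only [G]
    rw [mul_pow, Real.sq_sqrt (by positivity)]
  have hGs : Summable fun m => G m ^ 2 := by simpa only [hGsq] using hg
  have hGt : ∑' m, G m ^ 2 = B := by simp only [hGsq, hB]
  have conv : ∀ k : ℤ, (Summable fun k₁ => ‖f k₁‖ * G (k - k₁)) ∧
      ∑' k₁, ‖f k₁‖ * G (k - k₁) ≤ Real.sqrt A * Real.sqrt B := by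
    intro k
    have h1 := tsum_mul_le_sqrt (a := fun k₁ => ‖f k₁‖) (b := fun k₁ => G (k - k₁))
      (fun _ => norm_nonneg _) (fun _ => hG0 _) hf
      ((Equiv.subLeft k).summable_iff (f := fun m => G m ^ 2) |>.2 hGs)
    have h2 : ∑' k₁, G (k - k₁) ^ 2 = B := by
      rw [← hGt]
      exact (Equiv.subLeft k).tsum_eq (fun m => G m ^ 2)
    rw [h2] at h1
    exact h1
  have inner : ∀ k : ℤ, ∑' k₁ : ℤ,
      (if k ≠ 0 ∧ 10 * |k| < |k₁| then
        (|(k : ℝ)|)⁻¹ * |(k₁ : ℝ)| * ‖f k₁‖ * ‖g (k - k₁)‖ * ‖h k‖ else 0)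
      ≤ 2 * (Real.sqrt A * Real.sqrt B) * ((|(k : ℝ)|)⁻¹ * ‖h k‖) := by
    intro k
    have hc : 0 ≤ 2 * ((|(k : ℝ)|)⁻¹ * ‖h k‖) := by positivity
    have hpt : ∀ k₁ : ℤ, (if k ≠ 0 ∧ 10 * |k| < |k₁| then
        (|(k : ℝ)|)⁻¹ * |(k₁ : ℝ)| * ‖f k₁‖ * ‖g (k - k₁)‖ * ‖h k‖ else 0)
        ≤ 2 * ((|(k : ℝ)|)⁻¹ * ‖h k‖) * (‖f k₁‖ * G (k - k₁)) := by
      intro k₁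
      split_ifs with hk
      · have h1 := abs_le_two_mul_sqrt hk.2
        have h2 : 0 ≤ (|(k : ℝ)|)⁻¹ * ‖f k₁‖ * ‖g (k - k₁)‖ * ‖h k‖ := by positivity
        have h3 := mul_le_mul_of_nonneg_right h1 h2
        simp only [G]
        linarith
      · exact mul_nonneg hc (mul_nonneg (norm_nonneg _) (hG0 _))
    have hs := (conv k).1.mul_left (2 * ((|(k : ℝ)|)⁻¹ * ‖h k‖))
    have hs' := Summable.of_nonneg_of_le
      (fun k₁ => by split_ifs <;> positivity) hpt hs
    calc _ ≤ ∑' k₁, 2 * ((|(k : ℝ)|)⁻¹ * ‖h k‖) * (‖f k₁‖ * G (k - k₁)) :=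
          hs'.tsum_le_tsum hpt hs
      _ = 2 * ((|(k : ℝ)|)⁻¹ * ‖h k‖) * ∑' k₁, ‖f k₁‖ * G (k - k₁) := tsum_mul_left
      _ ≤ 2 * ((|(k : ℝ)|)⁻¹ * ‖h k‖) * (Real.sqrt A * Real.sqrt B) :=
          mul_le_mul_of_nonneg_left (conv k).2 hc
      _ = _ := by ring
  obtain ⟨hos, hob⟩ := tsum_mul_le_sqrt (a := fun k : ℤ => (|(k : ℝ)|)⁻¹) (b := fun k => ‖h k‖)
    (fun _ => by positivity) (fun _ => norm_nonneg _) summable_inv_abs_sq hh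
  have hs := hos.mul_left (2 * (Real.sqrt A * Real.sqrt B))
  have hs' := Summable.of_nonneg_of_le
    (fun k => tsum_nonneg fun k₁ => by split_ifs <;> positivity) inner hs
  calc _ ≤ ∑' k : ℤ, 2 * (Real.sqrt A * Real.sqrt B) * ((|(k : ℝ)|)⁻¹ * ‖h k‖) :=
        hs'.tsum_le_tsum inner hs
    _ = 2 * (Real.sqrt A * Real.sqrt B) * ∑' k : ℤ, (|(k : ℝ)|)⁻¹ * ‖h k‖ := tsum_mul_left
    _ ≤ 2 * (Real.sqrt A * Real.sqrt B) * (S * Real.sqrt D) :=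
        mul_le_mul_of_nonneg_left hob (by positivity)
    _ = 2 * S * Real.sqrt A * Real.sqrt B * Real.sqrt D := by ring
    _ ≤ _ := by
        gcongr
        · linarith
        · exact le_two_pi_mul hA0
        · exact le_two_pi_mul hB0
        · exact le_two_pi_mul hD0

end
end

section
/- There is an absolute constant C such that for all integers k,k₁,k₂,k₃ with k₁+k₂+k₃=k, k≠0 and |k₂|≥|k₃|, all τ>0, all s∈[0,τ], and all α∈[0,1]: |k₁/k| · |e^{2iskk₁}−1| · |e^{2isk₂k₃}−1| ≤ C τ |k|^{−α} |k₁| |k₂| |k₃|^α. -/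
/-!
With `r = |k₃| / |k|`, the right-hand side is `C τ |k₁| |k₂| r ^ α`. Each phase factor
`‖e^{iθ} - 1‖` is at most `2` and at most `|θ|`, and it is enough to use the second bound on only
one of the two factors.

* If `k₃ = 0`, the second factor vanishes.
* If `r ≤ 1`, the bound `2 τ |k₂| |k₃|` on the second factor gives `4 τ |k₁| |k₂| r`, and
  `r ≤ r ^ α`.
* If `r ≥ 1`, the bound `2 τ |k| |k₁|` on the first factor gives `4 τ |k₁|²`. Here
  `|k₁| ≤ |k| + |k₂| + |k₃| ≤ 3 |k₂|` and `1 ≤ r ^ α`, so `C = 12` works.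
-/

noncomputable section

open Complex MeasureTheory
open scoped BigOperators

lemma norm_phase_sub_one_le (s : ℝ) (m n : ℤ) :
    ‖Complex.exp (2 * Complex.I * (s : ℂ) * (m : ℂ) * (n : ℂ)) - 1‖ ≤ 2 ∧
    ‖Complex.exp (2 * Complex.I * (s : ℂ) * (m : ℂ) * (n : ℂ)) - 1‖ ≤
      2 * |s| * |(m : ℝ)| * |(n : ℝ)| := by
  have e : 2 * Complex.I * (s : ℂ) * (m : ℂ) * (n : ℂ)
      = Complex.I * ((2 * s * m * n : ℝ) : ℂ) := by
    push_cast; ring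
  rw [e]
  constructor
  · refine (norm_sub_le _ _).trans ?_
    rw [mul_comm, Complex.norm_exp_ofReal_mul_I, norm_one]
    norm_num
  · refine (Real.norm_exp_I_mul_ofReal_sub_one_le).trans ?_
    simp

theorem phase_multiplier_bound :
    ∃ C : ℝ, 0 < C ∧ ∀ k k₁ k₂ k₃ : ℤ, k₁ + k₂ + k₃ = k → k ≠ 0 → |k₃| ≤ |k₂| →
      ∀ τ : ℝ, 0 < τ → ∀ s : ℝ, s ∈ Set.Icc 0 τ → ∀ α : ℝ, α ∈ Set.Icc (0 : ℝ) 1 →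
        |(k₁ : ℝ)| / |(k : ℝ)| *
            ‖Complex.exp (2 * Complex.I * (s : ℂ) * (k : ℂ) * (k₁ : ℂ)) - 1‖ *
            ‖Complex.exp (2 * Complex.I * (s : ℂ) * (k₂ : ℂ) * (k₃ : ℂ)) - 1‖ ≤
          C * τ * |(k : ℝ)| ^ (-α) * |(k₁ : ℝ)| * |(k₂ : ℝ)| * |(k₃ : ℝ)| ^ α := by
  refine ⟨12, by norm_num, ?_⟩
  intro k k₁ k₂ k₃ hsum hk h32 τ hτ s hs α hα
  by_cases hk3 : k₃ = 0
  · subst hk3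
    have : 0 ≤ 12 * τ * |(k : ℝ)| ^ (-α) * |(k₁ : ℝ)| * |(k₂ : ℝ)| * |((0 : ℤ) : ℝ)| ^ α := by
      positivity
    simpa using this
  obtain ⟨hA2, hAs⟩ := norm_phase_sub_one_le s k k₁
  obtain ⟨hB2, hBs⟩ := norm_phase_sub_one_le s k₂ k₃
  rw [abs_of_nonneg hs.1] at hAs hBs
  set A := ‖Complex.exp (2 * Complex.I * (s : ℂ) * (k : ℂ) * (k₁ : ℂ)) - 1‖
  set B := ‖Complex.exp (2 * Complex.I * (s : ℂ) * (k₂ : ℂ) * (k₃ : ℂ)) - 1‖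
  have hA0 : 0 ≤ A := norm_nonneg _
  have hB0 : 0 ≤ B := norm_nonneg _
  have h1 : |k₁| ≤ |k| + |k₂| + |k₃| := by grind
  have h32' : |(k₃ : ℝ)| ≤ |(k₂ : ℝ)| := by exact_mod_cast h32
  have h1' : |(k₁ : ℝ)| ≤ |(k : ℝ)| + |(k₂ : ℝ)| + |(k₃ : ℝ)| := by exact_mod_cast h1
  have ha : 0 < |(k : ℝ)| := by positivity
  have hd : 0 < |(k₃ : ℝ)| := by positivity
  have hb : 0 ≤ |(k₁ : ℝ)| := abs_nonneg _
  have hc : 0 ≤ |(k₂ : ℝ)| := abs_nonneg _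
  generalize |(k : ℝ)| = a at *
  generalize |(k₁ : ℝ)| = b at *
  generalize |(k₂ : ℝ)| = c at *
  generalize |(k₃ : ℝ)| = d at *
  have hr : 12 * τ * a ^ (-α) * b * c * d ^ α = 12 * τ * b * c * (d / a) ^ α := by
    rw [Real.div_rpow hd.le ha.le, Real.rpow_neg ha.le]
    ring
  rw [hr]
  rcases le_total d a with hda | had
  · have hpow : d / a ≤ (d / a) ^ α := by
      simpa using Real.rpow_le_rpow_of_exponent_ge (by positivity) ((div_le_one ha).2 hda) hα.2
    calc b / a * A * B ≤ b / a * 2 * (2 * τ * c * d) := by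
          have : B ≤ 2 * τ * c * d := hBs.trans (by have := hs.2; gcongr)
          gcongr
      _ = 4 * τ * b * c * (d / a) := by ring
      _ ≤ 12 * τ * b * c * (d / a) ^ α := by
          gcongr
          norm_num
  · have hpow : 1 ≤ (d / a) ^ α := Real.one_le_rpow ((one_le_div ha).2 had) hα.1
    calc b / a * A * B ≤ b / a * (2 * τ * a * b) * 2 := by
          have : A ≤ 2 * τ * a * b := hAs.trans (by have := hs.2; gcongr)
          gcongr
      _ = 4 * τ * b * b := by field_simp; ring
      _ ≤ 4 * τ * b * (3 * c) := by
          gcongr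
          linarith
      _ = 12 * τ * b * c * 1 := by ring
      _ ≤ 12 * τ * b * c * (d / a) ^ α := by gcongr

end
end

section
/- Let λ∈{1,−1}, t∈ℝ, τ∈(0,1/2], N a positive integer, and w∈H¹(𝕋), and let R₅ be defined as in the context. Then ‖R₅‖_{L²} ≤ C τ² √(ln(1/τ)) ‖w‖_{H¹}³, where C is an absolute constant. -/
/-!
Bounding `|e^{ix} - 1| ≤ min(2, |x|)` in the time integral and writing `b_k = |k| |ŵ_k|`, the
`k`-th coefficient of `R₅` is at most `4τ` times
`T_k = ∑ min(1/|k|, τ|k₁|) min(τ, 1/|k₂k₃|) b_{-k₁} b_{k₂} b_{k₃}`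
(the terms with `k₂k₃ = 0` vanish), so it suffices to show `‖T‖_{ℓ²} ≲ τ ‖b‖³_{ℓ²}`.

By duality, pair `T` with a sequence `c` and group the frequencies as `k - k₁ = l = k₂ + k₃`.
For fixed `l`, Cauchy–Schwarz separates the multipliers from the sequences and produces the
factors `α(l) = ∑ₖ min(1/|k|, τ|k-l|)²` and `β(l) = ∑ₘ min(τ, 1/|m(l-m)|)²`; a further
Cauchy–Schwarz in `l` then gives (`dual_bound`)
`(∑ c_k T_k)² ≤ (sup_l α(l) β(l)) ‖c‖² ‖b‖⁶`.

Everything thus reduces to `α(l) β(l) ≲ τ²` (`alphaSum_mul_betaSum_le`). The lattice sum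
`∑_{k ≠ 0} min(1, x²/k²) ≤ 8x` (`tsum_trunc_le`) yields `α(l) ≲ √τ + τ|l|` as well as both
`β(l) ≲ τ^{3/2}` and `β(l) ≲ τ/|l|`, and the product follows. The resulting bound `τ² ‖w‖³_{H¹}`
has no logarithm; since `log(1/τ) ≥ log 2` for `τ ≤ 1/2`, it implies the stated one.
-/

noncomputable section

open Complex MeasureTheory
open scoped BigOperators

/-- The defect term `R₅`. -/
def R5 (lam t τ : ℝ) (N : ℕ) (w : FSeq) : FSeq := fun k =>
  if k ≠ 0 ∧ |k| ≤ (N : ℤ) then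
    Complex.I * (lam : ℂ) * ∑' p : ℤ × ℤ,
      (if |k - p.1| ≤ (N : ℤ) then
        (∫ s in (0 : ℝ)..τ, ((p.1 : ℂ) / (k : ℂ)) *
          Complex.exp (Complex.I * (t : ℂ) *
            ((k : ℂ) ^ 2 + (p.1 : ℂ) ^ 2 - (p.2 : ℂ) ^ 2 - ((k - p.1 - p.2 : ℤ) : ℂ) ^ 2)) *
          (Complex.exp (2 * Complex.I * (s : ℂ) * (k : ℂ) * (p.1 : ℂ)) - 1) *
          (Complex.exp (2 * Complex.I * (s : ℂ) * (p.2 : ℂ) * ((k - p.1 - p.2 : ℤ) : ℂ)) - 1)) *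
        (starRingEnd ℂ) (w (-p.1)) * w p.2 * w (k - p.1 - p.2)
      else 0)
  else 0

/-! ### Cauchy–Schwarz and a lattice sum -/

/-- Cauchy–Schwarz for sums in `[0,∞]`, in the form free of square roots. -/
lemma tsum_sq_le_of_sq_le {ι : Type*} (f g h : ι → ENNReal)
    (H : ∀ i, f i ^ 2 ≤ g i * h i) :
    (∑' i, f i) ^ 2 ≤ (∑' i, g i) * ∑' i, h i := by
  have sq_half : ∀ a : ENNReal, (a ^ (1 / 2 : ℝ)) ^ 2 = a := fun a => by
    rw [← ENNReal.rpow_natCast, ← ENNReal.rpow_mul]; norm_num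
  have half_two : ∀ a : ENNReal, (a ^ (1 / 2 : ℝ)) ^ (2 : ℝ) = a := fun a => by
    rw [← ENNReal.rpow_mul]; norm_num
  have hf : ∀ i, f i ≤ g i ^ (1 / 2 : ℝ) * h i ^ (1 / 2 : ℝ) := fun i => by
    rw [← ENNReal.pow_le_pow_left_iff (n := 2) (by norm_num), mul_pow, sq_half, sq_half]
    exact H i
  have key : ∑' i, f i ≤ (∑' i, g i) ^ (1 / 2 : ℝ) * (∑' i, h i) ^ (1 / 2 : ℝ) := by
    rw [ENNReal.tsum_eq_iSup_sum]
    refine iSup_le fun s => ?_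
    calc ∑ i ∈ s, f i ≤ ∑ i ∈ s, g i ^ (1 / 2 : ℝ) * h i ^ (1 / 2 : ℝ) :=
          Finset.sum_le_sum fun i _ => hf i
      _ ≤ (∑ i ∈ s, g i) ^ (1 / 2 : ℝ) * (∑ i ∈ s, h i) ^ (1 / 2 : ℝ) := by
          have := ENNReal.inner_le_Lp_mul_Lq s (fun i => g i ^ (1 / 2 : ℝ))
            (fun i => h i ^ (1 / 2 : ℝ)) Real.HolderConjugate.two_two
          simpa only [half_two] using this
      _ ≤ _ := by
          gcongr <;> exact ENNReal.sum_le_tsum s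
  calc (∑' i, f i) ^ 2 ≤ ((∑' i, g i) ^ (1 / 2 : ℝ) * (∑' i, h i) ^ (1 / 2 : ℝ)) ^ 2 := by
        gcongr
    _ = _ := by rw [mul_pow, sq_half, sq_half]

/-- The truncated inverse square `min(1, x²/k²)`; its value at `k = 0` is `0`, because
`x ^ 2 / 0 = 0`. -/
def trunc (x : ℝ) (k : ℤ) : ℝ := min 1 (x ^ 2 / (k : ℝ) ^ 2)

lemma trunc_nonneg (x : ℝ) (k : ℤ) : 0 ≤ trunc x k := by
  unfold trunc; positivity

/-- The partial sums are dominated by those of the telescoping series with partial sums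
`4xn/(x+n)`. -/
lemma sum_range_trunc_le {x : ℝ} (hx : 0 < x) (n : ℕ) :
    ∑ i ∈ Finset.range n, trunc x ((i : ℤ) + 1) ≤ 4 * x * n / (x + n) := by
  induction n with
  | zero => simp
  | succ n ih =>
    rw [Finset.sum_range_succ]
    have hn : (0 : ℝ) ≤ n := n.cast_nonneg
    have h1 : 4 * x * ((n + 1 : ℕ) : ℝ) / (x + ((n + 1 : ℕ) : ℝ)) - 4 * x * n / (x + n)
        = 4 * x ^ 2 / ((x + n) * (x + n + 1)) := by
      push_cast
      field_simp
      ring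
    have h2 : trunc x ((n : ℤ) + 1) ≤ 4 * x ^ 2 / ((x + n) * (x + n + 1)) := by
      unfold trunc
      push_cast
      rcases le_total ((n : ℝ) + 1) x with h | h
      · refine (min_le_left _ _).trans ?_
        rw [le_div_iff₀ (by positivity)]
        nlinarith
      · refine (min_le_right _ _).trans ?_
        rw [div_le_div_iff₀ (by positivity) (by positivity)]
        have : (x + n) * (x + n + 1) ≤ 4 * ((n : ℝ) + 1) ^ 2 := by nlinarith
        nlinarith [sq_nonneg x]
    linarith

lemma tsum_trunc_le {x : ℝ} (hx : 0 < x) :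
    ∑' k : ℤ, ENNReal.ofReal (trunc x k) ≤ ENNReal.ofReal (8 * x) := by
  have hpos : ∑' n : ℕ, ENNReal.ofReal (trunc x ((n : ℤ) + 1)) ≤ ENNReal.ofReal (4 * x) := by
    rw [ENNReal.tsum_eq_iSup_nat]
    refine iSup_le fun n => ?_
    rw [← ENNReal.ofReal_sum_of_nonneg fun i _ => trunc_nonneg _ _]
    refine ENNReal.ofReal_le_ofReal ((sum_range_trunc_le hx n).trans ?_)
    have hn : (0 : ℝ) ≤ n := n.cast_nonneg
    rw [div_le_iff₀ (by positivity)]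
    nlinarith
  rw [tsum_of_nat_of_neg_add_one ENNReal.summable ENNReal.summable,
    tsum_eq_zero_add' ENNReal.summable]
  have h0 : trunc x ((0 : ℕ) : ℤ) = 0 := by simp [trunc]
  have hneg : ∀ n : ℕ, trunc x (-((n : ℤ) + 1)) = trunc x ((n : ℤ) + 1) := fun n => by
    unfold trunc; push_cast; rw [neg_sq]
  simp only [h0, hneg, ENNReal.ofReal_zero, zero_add]
  push_cast
  calc _ ≤ ENNReal.ofReal (4 * x) + ENNReal.ofReal (4 * x) := add_le_add hpos hpos
    _ = _ := by rw [← ENNReal.ofReal_add (by positivity) (by positivity)]; ring_nf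

/-- The same bound for a reflected and translated sum. -/
lemma tsum_trunc_sub_le {x : ℝ} (hx : 0 < x) (l : ℤ) :
    ∑' k : ℤ, ENNReal.ofReal (trunc x (l - k)) ≤ ENNReal.ofReal (8 * x) := by
  have := (Equiv.subLeft l).tsum_eq fun k : ℤ => ENNReal.ofReal (trunc x k)
  simp only [Equiv.subLeft_apply] at this
  rw [this]
  exact tsum_trunc_le hx

/-! ### The two multipliers and their square sums on the line `k₂ + k₃ = l` -/

/-- The multiplier `min(1/|k|, τ|k₁|)`, equal to `0` for `k = 0`. -/
def mulA (τ : ℝ) (k j : ℤ) : ℝ := min (1 / |(k : ℝ)|) (τ * |(j : ℝ)|)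

/-- The multiplier `min(τ, 1/|k₂k₃|)`, equal to `0` for `k₂k₃ = 0`. -/
def mulB (τ : ℝ) (m n : ℤ) : ℝ := min τ (1 / (|(m : ℝ)| * |(n : ℝ)|))

lemma mulA_nonneg {τ : ℝ} (h : 0 < τ) (k j : ℤ) : 0 ≤ mulA τ k j := by
  unfold mulA; positivity

lemma mulB_nonneg {τ : ℝ} (h : 0 < τ) (m n : ℤ) : 0 ≤ mulB τ m n := by
  unfold mulB; positivity

/-- `α(l) = ∑ₖ min(1/|k|, τ|k-l|)²`. -/
def alphaSum (τ : ℝ) (l : ℤ) : ENNReal := ∑' k : ℤ, ENNReal.ofReal (mulA τ k (k - l)) ^ 2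

/-- `β(l) = ∑ₘ min(τ, 1/|m(l-m)|)²`. -/
def betaSum (τ : ℝ) (l : ℤ) : ENNReal := ∑' m : ℤ, ENNReal.ofReal (mulB τ m (l - m)) ^ 2

lemma one_le_abs_cast {k : ℤ} (hk : k ≠ 0) : 1 ≤ |(k : ℝ)| := by
  exact_mod_cast Int.one_le_abs hk

/-- Pointwise bound behind the estimate of `α(l)`; it rests on `(k-l)² ≤ 2k² + 2l²`. -/
lemma mulA_sq_le {σ : ℝ} (hσ : 0 < σ) (k l : ℤ) :
    mulA (σ ^ 2) k (k - l) ^ 2 ≤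
      2 * σ ^ 2 * trunc (1 / σ) k + 2 * (σ ^ 2 * |(l : ℝ)|) ^ 2 * trunc (1 / (σ ^ 2 * |(l : ℝ)|)) k := by
  rcases eq_or_ne k 0 with rfl | hk
  · have h : 0 ≤ σ ^ 2 * |(l : ℝ)| := by positivity
    simp [mulA, trunc, h]
  have hk1 := one_le_abs_cast hk
  have hkpos : 0 < |(k : ℝ)| := by linarith
  have hA0 := mulA_nonneg (τ := σ ^ 2) (by positivity) k (k - l)
  have e1 : mulA (σ ^ 2) k (k - l) ^ 2 ≤ 1 / (k : ℝ) ^ 2 := by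
    have : mulA (σ ^ 2) k (k - l) ≤ 1 / |(k : ℝ)| := min_le_left _ _
    calc _ ≤ (1 / |(k : ℝ)|) ^ 2 := by gcongr
      _ = _ := by rw [div_pow, sq_abs, one_pow]
  have e2 : mulA (σ ^ 2) k (k - l) ^ 2 ≤ 2 * σ ^ 4 * (k : ℝ) ^ 2 + 2 * σ ^ 4 * (l : ℝ) ^ 2 := by
    have : mulA (σ ^ 2) k (k - l) ≤ σ ^ 2 * |((k - l : ℤ) : ℝ)| := min_le_right _ _
    calc _ ≤ (σ ^ 2 * |((k - l : ℤ) : ℝ)|) ^ 2 := by gcongr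
      _ = σ ^ 4 * ((k : ℝ) - l) ^ 2 := by rw [mul_pow, sq_abs]; push_cast; ring
      _ ≤ σ ^ 4 * (2 * (k : ℝ) ^ 2 + 2 * (l : ℝ) ^ 2) := by
          gcongr; nlinarith [sq_nonneg ((k : ℝ) + l)]
      _ = _ := by ring
  have hk2 : (0 : ℝ) < (k : ℝ) ^ 2 := by rw [← sq_abs]; positivity
  have f1 : min (1 / (k : ℝ) ^ 2) (σ ^ 4 * (k : ℝ) ^ 2) ≤ σ ^ 2 * trunc (1 / σ) k := by
    unfold trunc
    rw [mul_min_of_nonneg _ _ (by positivity)]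
    have hr : σ ^ 2 * ((1 / σ) ^ 2 / (k : ℝ) ^ 2) = 1 / (k : ℝ) ^ 2 := by field_simp
    rw [hr]
    refine le_min ?_ (min_le_left _ _)
    rcases le_total (σ ^ 2 * (k : ℝ) ^ 2) 1 with h | h
    · refine (min_le_right _ _).trans ?_
      nlinarith [sq_nonneg σ]
    · refine (min_le_left _ _).trans ?_
      rw [div_le_iff₀ hk2]; linarith
  have f2 : min (1 / (k : ℝ) ^ 2) (σ ^ 4 * (l : ℝ) ^ 2) ≤
      (σ ^ 2 * |(l : ℝ)|) ^ 2 * trunc (1 / (σ ^ 2 * |(l : ℝ)|)) k := by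
    rcases eq_or_ne l 0 with rfl | hl
    · simp
    have hl1 := one_le_abs_cast hl
    have hlpos : 0 < |(l : ℝ)| := by linarith
    unfold trunc
    rw [mul_min_of_nonneg _ _ (by positivity)]
    have hr : (σ ^ 2 * |(l : ℝ)|) ^ 2 * ((1 / (σ ^ 2 * |(l : ℝ)|)) ^ 2 / (k : ℝ) ^ 2)
        = 1 / (k : ℝ) ^ 2 := by field_simp
    rw [hr, min_comm, mul_one, mul_pow, sq_abs]
    apply le_of_eq; ring_nf
  have hmin : mulA (σ ^ 2) k (k - l) ^ 2 ≤
      2 * min (1 / (k : ℝ) ^ 2) (σ ^ 4 * (k : ℝ) ^ 2)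
        + 2 * min (1 / (k : ℝ) ^ 2) (σ ^ 4 * (l : ℝ) ^ 2) := by
    have p1 : 0 ≤ min (1 / (k : ℝ) ^ 2) (σ ^ 4 * (k : ℝ) ^ 2) := by positivity
    have p2 : 0 ≤ min (1 / (k : ℝ) ^ 2) (σ ^ 4 * (l : ℝ) ^ 2) := by positivity
    have p3 : 0 ≤ 1 / (k : ℝ) ^ 2 := by positivity
    rcases min_choice (1 / (k : ℝ) ^ 2) (σ ^ 4 * (k : ℝ) ^ 2) with h | h <;>
    rcases min_choice (1 / (k : ℝ) ^ 2) (σ ^ 4 * (l : ℝ) ^ 2) with h' | h' <;>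
    rw [h] at p1 ⊢ <;> rw [h'] at p2 ⊢ <;> linarith
  linarith

lemma alphaSum_le {σ : ℝ} (hσ : 0 < σ) (l : ℤ) :
    alphaSum (σ ^ 2) l ≤ ENNReal.ofReal (16 * (σ + σ ^ 2 * |(l : ℝ)|)) := by
  unfold alphaSum
  have hterm : ∀ k : ℤ, ENNReal.ofReal (mulA (σ ^ 2) k (k - l)) ^ 2 ≤
      ENNReal.ofReal (2 * σ ^ 2) * ENNReal.ofReal (trunc (1 / σ) k) +
      ENNReal.ofReal (2 * (σ ^ 2 * |(l : ℝ)|) ^ 2) *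
        ENNReal.ofReal (trunc (1 / (σ ^ 2 * |(l : ℝ)|)) k) := fun k => by
    have t1 := trunc_nonneg (1 / σ) k
    have t2 := trunc_nonneg (1 / (σ ^ 2 * |(l : ℝ)|)) k
    rw [← ENNReal.ofReal_pow (mulA_nonneg (by positivity) _ _),
      ← ENNReal.ofReal_mul (by positivity), ← ENNReal.ofReal_mul (by positivity),
      ← ENNReal.ofReal_add (by positivity) (by positivity)]
    exact ENNReal.ofReal_le_ofReal (mulA_sq_le hσ k l)
  refine (ENNReal.tsum_le_tsum hterm).trans ?_
  rw [ENNReal.tsum_add, ENNReal.tsum_mul_left, ENNReal.tsum_mul_left, mul_add,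
    ENNReal.ofReal_add (by positivity) (by positivity)]
  refine add_le_add ?_ ?_
  · calc _ ≤ ENNReal.ofReal (2 * σ ^ 2) * ENNReal.ofReal (8 * (1 / σ)) := by
          gcongr; exact tsum_trunc_le (by positivity)
      _ = _ := by
          rw [← ENNReal.ofReal_mul (by positivity)]; congr 1; field_simp; norm_num
  · rcases eq_or_ne l 0 with rfl | hl
    · simp
    have hlpos : 0 < |(l : ℝ)| := by linarith [one_le_abs_cast hl]
    calc _ ≤ ENNReal.ofReal (2 * (σ ^ 2 * |(l : ℝ)|) ^ 2) *
            ENNReal.ofReal (8 * (1 / (σ ^ 2 * |(l : ℝ)|))) := by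
          gcongr; exact tsum_trunc_le (by positivity)
      _ = _ := by
          rw [← ENNReal.ofReal_mul (by positivity)]; congr 1; field_simp; norm_num

/-- If the square of the multiplier is bounded by truncated inverse squares, then `β(l)` is
controlled by the lattice sum. -/
lemma betaSum_le_of_pointwise {τ x : ℝ} (hτ : 0 < τ) (hx : 0 < x) (l : ℤ)
    (h : ∀ m : ℤ, mulB τ m (l - m) ^ 2 ≤ τ ^ 2 * (trunc x m + trunc x (l - m))) :
    betaSum τ l ≤ ENNReal.ofReal (16 * τ ^ 2 * x) := by
  unfold betaSum
  have hterm : ∀ m : ℤ, ENNReal.ofReal (mulB τ m (l - m)) ^ 2 ≤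
      ENNReal.ofReal (τ ^ 2) *
        (ENNReal.ofReal (trunc x m) + ENNReal.ofReal (trunc x (l - m))) := fun m => by
    have t1 := trunc_nonneg x m
    have t2 := trunc_nonneg x (l - m)
    rw [← ENNReal.ofReal_pow (mulB_nonneg hτ _ _),
      ← ENNReal.ofReal_add (by positivity) (by positivity), ← ENNReal.ofReal_mul (by positivity)]
    exact ENNReal.ofReal_le_ofReal (h m)
  refine (ENNReal.tsum_le_tsum hterm).trans ?_
  rw [ENNReal.tsum_mul_left, ENNReal.tsum_add]
  calc _ ≤ ENNReal.ofReal (τ ^ 2) * (ENNReal.ofReal (8 * x) + ENNReal.ofReal (8 * x)) := by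
        gcongr
        · exact tsum_trunc_le hx
        · exact tsum_trunc_sub_le hx l
    _ = _ := by
        rw [← ENNReal.ofReal_add (by positivity) (by positivity),
          ← ENNReal.ofReal_mul (by positivity)]
        congr 1; ring

lemma mulB_sq_le_right (τ : ℝ) (hτ : 0 < τ) (m n : ℤ) :
    mulB τ m n ^ 2 ≤ 1 / ((m : ℝ) ^ 2 * (n : ℝ) ^ 2) := by
  have h0 := mulB_nonneg hτ m n
  have : mulB τ m n ≤ 1 / (|(m : ℝ)| * |(n : ℝ)|) := min_le_right _ _
  calc _ ≤ (1 / (|(m : ℝ)| * |(n : ℝ)|)) ^ 2 := by gcongr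
    _ = _ := by rw [div_pow, mul_pow, sq_abs, sq_abs, one_pow]

lemma mulB_sq_le_left (τ : ℝ) (hτ : 0 < τ) (m n : ℤ) : mulB τ m n ^ 2 ≤ τ ^ 2 := by
  have h0 := mulB_nonneg hτ m n
  have : mulB τ m n ≤ τ := min_le_left _ _
  gcongr

lemma mulB_eq_zero (τ : ℝ) (hτ : 0 < τ) {m n : ℤ} (h : m = 0 ∨ n = 0) : mulB τ m n = 0 := by
  rcases h with rfl | rfl <;> simp [mulB, hτ.le]

/-- The bound `β(l) ≲ τ^{3/2}`, effective for `|l| ≲ τ^{-1/2}`. -/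
lemma betaSum_le_small {σ : ℝ} (hσ : 0 < σ) (l : ℤ) :
    betaSum (σ ^ 2) l ≤ ENNReal.ofReal (16 * σ ^ 3) := by
  have hτ : 0 < σ ^ 2 := by positivity
  have := betaSum_le_of_pointwise hτ (x := 1 / σ) (by positivity) l fun m => by
    set n := l - m
    have t1 := trunc_nonneg (1 / σ) m
    have t2 := trunc_nonneg (1 / σ) n
    by_cases h0 : m = 0 ∨ n = 0
    · rw [mulB_eq_zero _ hτ h0, zero_pow two_ne_zero]; positivity
    push Not at h0
    have hm : (0 : ℝ) < (m : ℝ) ^ 2 := by have := h0.1; positivity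
    have hn : (0 : ℝ) < (n : ℝ) ^ 2 := by have := h0.2; positivity
    have hleft := mulB_sq_le_left (σ ^ 2) hτ m n
    -- If one of the truncations is active, the factor `τ²` suffices;
    -- otherwise `τn² ≥ 1`, hence `1/(m²n²) ≤ τ/m²`.
    rcases min_choice (1 : ℝ) ((1 / σ) ^ 2 / (m : ℝ) ^ 2) with h | h
    · have : trunc (1 / σ) m = 1 := h
      nlinarith
    rcases le_total (1 : ℝ) ((1 / σ) ^ 2 / (n : ℝ) ^ 2) with h' | h'
    · have : trunc (1 / σ) n = 1 := min_eq_left h'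
      nlinarith
    have hm' : trunc (1 / σ) m = (1 / σ) ^ 2 / (m : ℝ) ^ 2 := h
    have hn' : 1 ≤ σ ^ 2 * (n : ℝ) ^ 2 := by
      rw [div_le_one hn, div_pow, one_pow, div_le_iff₀ hτ] at h'
      linarith
    calc _ ≤ 1 / ((m : ℝ) ^ 2 * (n : ℝ) ^ 2) := mulB_sq_le_right _ hτ m n
      _ ≤ (σ ^ 2) ^ 2 * trunc (1 / σ) m := by
          rw [hm']
          have : (σ ^ 2) ^ 2 * ((1 / σ) ^ 2 / (m : ℝ) ^ 2) = σ ^ 2 / (m : ℝ) ^ 2 := by field_simp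
          rw [this, div_le_div_iff₀ (by positivity) hm]
          nlinarith
      _ ≤ _ := by gcongr; linarith
  refine this.trans (le_of_eq ?_)
  congr 1; field_simp

/-- The bound `β(l) ≲ τ/|l|`, effective for `|l| ≳ τ^{-1/2}`: on the line `m + n = l` one of
`|m|`, `|n|` is at least `|l|/2`. -/
lemma betaSum_le_large {τ : ℝ} (hτ : 0 < τ) {l : ℤ} (hl : l ≠ 0) :
    betaSum τ l ≤ ENNReal.ofReal (32 * (τ / |(l : ℝ)|)) := by
  have hlpos : 0 < |(l : ℝ)| := by linarith [one_le_abs_cast hl]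
  have main : ∀ m n : ℤ, m ≠ 0 → n ≠ 0 → |(l : ℝ)| ≤ 2 * |(n : ℝ)| →
      mulB τ m n ^ 2 ≤ τ ^ 2 * trunc (2 / (τ * |(l : ℝ)|)) m := by
    intro m n hm0 hn0 hln
    have hm : (0 : ℝ) < (m : ℝ) ^ 2 := by positivity
    have hn : (0 : ℝ) < (n : ℝ) ^ 2 := by positivity
    unfold trunc
    rw [mul_min_of_nonneg _ _ (by positivity), mul_one]
    refine le_min (mulB_sq_le_left τ hτ m n) ((mulB_sq_le_right τ hτ m n).trans ?_)
    have : τ ^ 2 * ((2 / (τ * |(l : ℝ)|)) ^ 2 / (m : ℝ) ^ 2)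
        = 4 / (|(l : ℝ)| ^ 2 * (m : ℝ) ^ 2) := by field_simp; norm_num
    rw [this, div_le_div_iff₀ (by positivity) (by positivity)]
    have h2 : |(l : ℝ)| ^ 2 ≤ 4 * (n : ℝ) ^ 2 := by
      calc _ ≤ (2 * |(n : ℝ)|) ^ 2 := by gcongr
        _ = _ := by rw [mul_pow, sq_abs]; norm_num
    nlinarith
  have := betaSum_le_of_pointwise hτ (x := 2 / (τ * |(l : ℝ)|)) (by positivity) l fun m => by
    obtain ⟨n, hn⟩ : ∃ n, n = l - m := ⟨_, rfl⟩
    rw [← hn]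
    have t1 := trunc_nonneg (2 / (τ * |(l : ℝ)|)) m
    have t2 := trunc_nonneg (2 / (τ * |(l : ℝ)|)) n
    by_cases h0 : m = 0 ∨ n = 0
    · rw [mulB_eq_zero _ hτ h0, zero_pow two_ne_zero]; positivity
    push Not at h0
    have hsum : |(l : ℝ)| ≤ |(m : ℝ)| + |(n : ℝ)| := by
      have : (l : ℝ) = m + n := by rw [hn]; push_cast; ring
      rw [this]; exact abs_add_le _ _
    rcases le_total |(m : ℝ)| |(n : ℝ)| with h | h
    · have := main m n h0.1 h0.2 (by linarith)
      nlinarith [sq_nonneg τ]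
    · have := main n m h0.2 h0.1 (by linarith)
      have hc : mulB τ m n = mulB τ n m := by unfold mulB; rw [mul_comm |(m : ℝ)|]
      rw [hc]
      nlinarith [sq_nonneg τ]
  refine this.trans (le_of_eq ?_)
  congr 1; field_simp; norm_num

lemma alphaSum_mul_betaSum_le {τ : ℝ} (hτ : 0 < τ) (l : ℤ) :
    alphaSum τ l * betaSum τ l ≤ ENNReal.ofReal (768 * τ ^ 2) := by
  obtain ⟨σ, hσ, rfl⟩ : ∃ σ : ℝ, 0 < σ ∧ σ ^ 2 = τ :=
    ⟨√τ, Real.sqrt_pos.2 hτ, Real.sq_sqrt hτ.le⟩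
  have hs := betaSum_le_small hσ l
  calc _ ≤ ENNReal.ofReal (16 * (σ + σ ^ 2 * |(l : ℝ)|)) * betaSum (σ ^ 2) l := by
        gcongr; exact alphaSum_le hσ l
    _ = ENNReal.ofReal (16 * σ) * betaSum (σ ^ 2) l
        + ENNReal.ofReal (16 * (σ ^ 2 * |(l : ℝ)|)) * betaSum (σ ^ 2) l := by
        rw [← add_mul, ← ENNReal.ofReal_add (by positivity) (by positivity), mul_add]
    _ ≤ ENNReal.ofReal (256 * (σ ^ 2) ^ 2) + ENNReal.ofReal (512 * (σ ^ 2) ^ 2) := by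
        refine add_le_add ?_ ?_
        · calc _ ≤ ENNReal.ofReal (16 * σ) * ENNReal.ofReal (16 * σ ^ 3) := by gcongr
            _ = _ := by rw [← ENNReal.ofReal_mul (by positivity)]; congr 1; ring
        · rcases eq_or_ne l 0 with rfl | hl
          · simp
          have hlpos : 0 < |(l : ℝ)| := by linarith [one_le_abs_cast hl]
          calc _ ≤ ENNReal.ofReal (16 * (σ ^ 2 * |(l : ℝ)|)) *
                  ENNReal.ofReal (32 * (σ ^ 2 / |(l : ℝ)|)) := by
                gcongr; exact betaSum_le_large hτ hl
            _ = _ := by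
                rw [← ENNReal.ofReal_mul (by positivity)]; congr 1; field_simp; norm_num
    _ = _ := by
        rw [← ENNReal.ofReal_add (by positivity) (by positivity)]; congr 1; ring

/-! ### The quadrilinear estimate -/

/-- The positive trilinear sum
`∑_l min(1/|k|, τ|k-l|) b_{l-k} ∑_m min(τ, 1/|m(l-m)|) b_m b_{l-m}` that dominates the `k`-th
coefficient of `R₅`, with `l = k₂ + k₃` and `m = k₂`. -/
def triSum (τ : ℝ) (b : ℤ → ENNReal) (k : ℤ) : ENNReal :=
  ∑' l : ℤ, ∑' m : ℤ, (ENNReal.ofReal (mulA τ k (k - l)) * b (l - k)) *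
    (ENNReal.ofReal (mulB τ m (l - m)) * (b m * b (l - m)))

/-- Dual form of the `ℓ²` bound for `triSum`: after grouping the frequencies as
`k - k₁ = l = k₂ + k₃`, Cauchy–Schwarz in `k`, in `m` and in `l` costs only
`sup_l α(l) β(l) ≲ τ²`. -/
lemma dual_bound {τ : ℝ} (hτ : 0 < τ) (b c : ℤ → ENNReal) :
    (∑' k, c k * triSum τ b k) ^ 2 ≤
      ENNReal.ofReal (768 * τ ^ 2) * (∑' k, c k ^ 2) * (∑' k, b k ^ 2) ^ 3 := by
  set A : ℤ → ENNReal := fun l => ∑' k, ENNReal.ofReal (mulA τ k (k - l)) * (c k * b (l - k))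
  set E : ℤ → ENNReal := fun l => ∑' m, ENNReal.ofReal (mulB τ m (l - m)) * (b m * b (l - m))
  set P : ℤ → ENNReal := fun l => ∑' k, (c k * b (l - k)) ^ 2
  set D : ℤ → ENNReal := fun l => ∑' m, (b m * b (l - m)) ^ 2
  have hQ : ∑' k, c k * triSum τ b k = ∑' l, A l * E l := by
    have h1 : ∀ k, c k * triSum τ b k =
        ∑' l, ENNReal.ofReal (mulA τ k (k - l)) * (c k * b (l - k)) * E l := fun k => by
      unfold triSum
      rw [← ENNReal.tsum_mul_left]
      refine tsum_congr fun l => ?_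
      rw [ENNReal.tsum_mul_left]
      ring
    rw [tsum_congr h1, ENNReal.tsum_comm]
    exact tsum_congr fun l => ENNReal.tsum_mul_right
  have hA : ∀ l, A l ^ 2 ≤ alphaSum τ l * P l := fun l =>
    tsum_sq_le_of_sq_le _ _ _ fun k => (mul_pow _ _ _).le
  have hE : ∀ l, E l ^ 2 ≤ betaSum τ l * D l := fun l =>
    tsum_sq_le_of_sq_le _ _ _ fun m => (mul_pow _ _ _).le
  have hshift : ∀ j : ℤ, ∑' l : ℤ, b (l - j) ^ 2 = ∑' l : ℤ, b l ^ 2 := fun j =>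
    (Equiv.subRight j).tsum_eq fun l => b l ^ 2
  have hconv : ∀ a : ℤ → ENNReal, ∑' l : ℤ, ∑' k : ℤ, (a k * b (l - k)) ^ 2
      = (∑' k, a k ^ 2) * ∑' k, b k ^ 2 := fun a => by
    rw [ENNReal.tsum_comm, ← ENNReal.tsum_mul_right]
    refine tsum_congr fun k => ?_
    simp only [mul_pow]
    rw [ENNReal.tsum_mul_left, hshift]
  rw [hQ]
  calc (∑' l, A l * E l) ^ 2
      ≤ (∑' l, ENNReal.ofReal (768 * τ ^ 2) * P l) * ∑' l, D l := by
        refine tsum_sq_le_of_sq_le _ _ _ fun l => ?_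
        calc (A l * E l) ^ 2 = A l ^ 2 * E l ^ 2 := mul_pow _ _ _
          _ ≤ (alphaSum τ l * P l) * (betaSum τ l * D l) := mul_le_mul' (hA l) (hE l)
          _ = (alphaSum τ l * betaSum τ l) * P l * D l := by ring
          _ ≤ _ := by gcongr; exact alphaSum_mul_betaSum_le hτ l
    _ = _ := by
        rw [ENNReal.tsum_mul_left, hconv c, hconv b]; ring

/-! ### Bounding the coefficients of `R₅` -/

/-- The coefficients `|k| |ŵ_k|` of the derivative. -/
def derivAbs (w : FSeq) (k : ℤ) : ℝ := |(k : ℝ)| * ‖w k‖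

lemma norm_exp_sub_one_le_min (x : ℝ) : ‖Complex.exp (Complex.I * x) - 1‖ ≤ min 2 |x| := by
  refine le_min ?_ Real.norm_exp_I_mul_ofReal_sub_one_le
  calc _ ≤ ‖Complex.exp (Complex.I * x)‖ + ‖(1 : ℂ)‖ := norm_sub_le _ _
    _ = 2 := by rw [mul_comm, Complex.norm_exp_ofReal_mul_I]; norm_num

/-- The time integral is at most `4τ` times the two multipliers, up to the weights
`|k₁|`, `|k₂|`, `|k₃|`. -/
lemma norm_integral_le {t τ : ℝ} (hτ : 0 < τ) {k : ℤ} (hk : k ≠ 0) (j m n : ℤ) :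
    ‖∫ s in (0 : ℝ)..τ, ((j : ℂ) / (k : ℂ)) *
          Complex.exp (Complex.I * (t : ℂ) *
            ((k : ℂ) ^ 2 + (j : ℂ) ^ 2 - (m : ℂ) ^ 2 - (n : ℂ) ^ 2)) *
          (Complex.exp (2 * Complex.I * (s : ℂ) * (k : ℂ) * (j : ℂ)) - 1) *
          (Complex.exp (2 * Complex.I * (s : ℂ) * (m : ℂ) * (n : ℂ)) - 1)‖ ≤
      4 * τ * (mulA τ k j * mulB τ m n * (|(j : ℝ)| * |(m : ℝ)| * |(n : ℝ)|)) := by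
  have hkpos : 0 < |(k : ℝ)| := by linarith [one_le_abs_cast hk]
  have hA : |(j : ℝ)| / |(k : ℝ)| * min 2 (2 * τ * |(k : ℝ)| * |(j : ℝ)|)
      = 2 * |(j : ℝ)| * mulA τ k j := by
    unfold mulA
    rw [mul_min_of_nonneg _ _ (by positivity), mul_min_of_nonneg _ _ (by positivity)]
    congr 1 <;> field_simp
  have hB : min 2 (2 * τ * |(m : ℝ)| * |(n : ℝ)|) = 2 * (|(m : ℝ)| * |(n : ℝ)|) * mulB τ m n := by
    by_cases h0 : m = 0 ∨ n = 0
    · rw [mulB_eq_zero τ hτ h0]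
      rcases h0 with rfl | rfl <;> simp
    push Not at h0
    have hm : 0 < |(m : ℝ)| := by linarith [one_le_abs_cast h0.1]
    have hn : 0 < |(n : ℝ)| := by linarith [one_le_abs_cast h0.2]
    unfold mulB
    rw [mul_min_of_nonneg _ _ (by positivity), min_comm]
    congr 1 <;> field_simp
  have hexp : ∀ s ∈ Set.uIoc (0 : ℝ) τ, ∀ a b : ℤ,
      ‖Complex.exp (2 * Complex.I * (s : ℂ) * (a : ℂ) * (b : ℂ)) - 1‖ ≤
        min 2 (2 * τ * |(a : ℝ)| * |(b : ℝ)|) := by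
    intro s hs a b
    rw [Set.uIoc_of_le hτ.le] at hs
    have e : 2 * Complex.I * (s : ℂ) * (a : ℂ) * (b : ℂ)
        = Complex.I * ((2 * s * a * b : ℝ) : ℂ) := by push_cast; ring
    rw [e]
    refine (norm_exp_sub_one_le_min _).trans (min_le_min_left _ ?_)
    rw [abs_mul, abs_mul, abs_mul, abs_of_pos hs.1, abs_two]
    gcongr
    exact hs.2
  have hphase : ‖Complex.exp (Complex.I * (t : ℂ) *
      ((k : ℂ) ^ 2 + (j : ℂ) ^ 2 - (m : ℂ) ^ 2 - (n : ℂ) ^ 2))‖ = 1 := by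
    have e : Complex.I * (t : ℂ) * ((k : ℂ) ^ 2 + (j : ℂ) ^ 2 - (m : ℂ) ^ 2 - (n : ℂ) ^ 2)
        = ((t * ((k : ℝ) ^ 2 + (j : ℝ) ^ 2 - (m : ℝ) ^ 2 - (n : ℝ) ^ 2) : ℝ) : ℂ) * Complex.I := by
      push_cast; ring
    rw [e, Complex.norm_exp_ofReal_mul_I]
  refine (intervalIntegral.norm_integral_le_of_norm_le_const
    (C := (2 * |(j : ℝ)| * mulA τ k j) * (2 * (|(m : ℝ)| * |(n : ℝ)|) * mulB τ m n))
    fun s hs => ?_).trans (le_of_eq ?_)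
  · rw [norm_mul, norm_mul, norm_mul, hphase, norm_div, Complex.norm_intCast, Complex.norm_intCast,
      mul_one, ← hA, ← hB]
    have := hexp s hs k j
    have := hexp s hs m n
    gcongr
  · rw [sub_zero, abs_of_pos hτ]; ring

lemma enorm_R5_le {lam t τ : ℝ} (hlam : lam = 1 ∨ lam = -1) (hτ : 0 < τ) (N : ℕ) (w : FSeq)
    (k : ℤ) :
    ‖R5 lam t τ N w k‖ₑ ≤
      ENNReal.ofReal (4 * τ) * triSum τ (fun j => ENNReal.ofReal (derivAbs w j)) k := by
  unfold R5
  split_ifs with hk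
  swap
  · simp
  have hunit : ‖Complex.I * (lam : ℂ)‖ₑ = 1 := by
    rw [← ofReal_norm]
    rcases hlam with rfl | rfl <;> simp
  rw [enorm_mul, hunit, one_mul]
  refine enorm_tsum_le_tsum_enorm.trans ?_
  -- Substituting `l = k - k₁` turns the dominating sum into a sum over pairs `(k₁, k₂)`.
  have hre : triSum τ (fun j => ENNReal.ofReal (derivAbs w j)) k
      = ∑' p : ℤ × ℤ, (ENNReal.ofReal (mulA τ k p.1) * ENNReal.ofReal (derivAbs w (-p.1))) *
        (ENNReal.ofReal (mulB τ p.2 (k - p.1 - p.2)) *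
          (ENNReal.ofReal (derivAbs w p.2) * ENNReal.ofReal (derivAbs w (k - p.1 - p.2)))) := by
    rw [ENNReal.tsum_prod (f := fun j m =>
      (ENNReal.ofReal (mulA τ k j) * ENNReal.ofReal (derivAbs w (-j))) *
        (ENNReal.ofReal (mulB τ m (k - j - m)) *
          (ENNReal.ofReal (derivAbs w m) * ENNReal.ofReal (derivAbs w (k - j - m))))),
      ← (Equiv.subLeft k).tsum_eq]
    unfold triSum
    refine tsum_congr fun l => tsum_congr fun m => ?_
    simp only [Equiv.subLeft_apply, neg_sub, sub_sub_cancel]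
  rw [hre, ← ENNReal.tsum_mul_left]
  refine ENNReal.tsum_le_tsum fun p => ?_
  split_ifs with hp
  swap
  · simp
  obtain ⟨j, m⟩ := p
  dsimp only
  obtain ⟨n, hn⟩ : ∃ n, n = k - j - m := ⟨_, rfl⟩
  rw [← hn]
  have a0 := mulA_nonneg hτ k j
  have b0 := mulB_nonneg hτ m n
  have d0 : ∀ i, 0 ≤ derivAbs w i := fun i => by unfold derivAbs; positivity
  have d1 := d0 (-j)
  have d2 := d0 m
  have d3 := d0 n
  rw [← ENNReal.ofReal_mul a0, ← ENNReal.ofReal_mul d2, ← ENNReal.ofReal_mul b0,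
    ← ENNReal.ofReal_mul (by positivity), ← ENNReal.ofReal_mul (by positivity), ← ofReal_norm]
  refine ENNReal.ofReal_le_ofReal ?_
  rw [norm_mul, norm_mul, norm_mul, RCLike.norm_conj]
  have := norm_integral_le (t := t) hτ hk.1 j m n
  calc _ ≤ 4 * τ * (mulA τ k j * mulB τ m n * (|(j : ℝ)| * |(m : ℝ)| * |(n : ℝ)|))
        * ‖w (-j)‖ * ‖w m‖ * ‖w n‖ := by gcongr
    _ = _ := by
        unfold derivAbs
        push_cast
        rw [abs_neg]
        ring

/-- The `ℓ²` bound `∑ₖ |(R₅)̂ₖ|² ≲ τ⁴ B³`, where `B` bounds `∑ₖ k²|ŵₖ|²`. -/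
lemma sum_norm_R5_sq_le {lam t τ : ℝ} (hlam : lam = 1 ∨ lam = -1) (hτ : 0 < τ) (N : ℕ)
    (w : FSeq) {B : ℝ} (hB0 : 0 ≤ B)
    (hB : ∑' k, ENNReal.ofReal (derivAbs w k) ^ 2 ≤ ENNReal.ofReal B) (F : Finset ℤ) :
    ∑ k ∈ F, ‖R5 lam t τ N w k‖ ^ 2 ≤ 12288 * τ ^ 4 * B ^ 3 := by
  set r : ℤ → ℝ := fun k => ‖R5 lam t τ N w k‖
  set b : ℤ → ENNReal := fun j => ENNReal.ofReal (derivAbs w j)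
  set S : ℝ := ∑ k ∈ F, r k ^ 2
  have hS0 : 0 ≤ S := Finset.sum_nonneg fun k _ => by positivity
  -- The dual sequence is `R₅` itself, cut off to `F`.
  set c : ℤ → ENNReal := fun k => if k ∈ F then ENNReal.ofReal (r k) else 0
  have hr : ∀ k, 0 ≤ r k := fun k => norm_nonneg _
  have hc : ∑' k, c k ^ 2 = ENNReal.ofReal S := by
    rw [tsum_eq_sum (s := F) fun k hk => by simp [c, hk],
      ENNReal.ofReal_sum_of_nonneg fun k _ => by positivity]
    refine Finset.sum_congr rfl fun k hk => ?_
    simp only [c, hk, if_true]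
    rw [ENNReal.ofReal_pow (hr k)]
  have h1 : ENNReal.ofReal S ≤ ENNReal.ofReal (4 * τ) * ∑' k, c k * triSum τ b k := by
    rw [← hc, ← ENNReal.tsum_mul_left]
    refine ENNReal.tsum_le_tsum fun k => ?_
    have : c k ≤ ENNReal.ofReal (4 * τ) * triSum τ b k := by
      by_cases hk : k ∈ F
      · simp only [c, hk, if_true, r]
        rw [ofReal_norm]
        exact enorm_R5_le hlam hτ N w k
      · simp [c, hk]
    calc c k ^ 2 = c k * c k := sq _
      _ ≤ c k * (ENNReal.ofReal (4 * τ) * triSum τ b k) := by gcongr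
      _ = _ := by ring
  have h2 : ENNReal.ofReal (S ^ 2) ≤ ENNReal.ofReal (12288 * τ ^ 4 * B ^ 3 * S) := by
    calc ENNReal.ofReal (S ^ 2) = ENNReal.ofReal S ^ 2 := ENNReal.ofReal_pow hS0 2
      _ ≤ (ENNReal.ofReal (4 * τ) * ∑' k, c k * triSum τ b k) ^ 2 := by gcongr
      _ = ENNReal.ofReal (4 * τ) ^ 2 * (∑' k, c k * triSum τ b k) ^ 2 := mul_pow _ _ _
      _ ≤ ENNReal.ofReal (4 * τ) ^ 2 *
          (ENNReal.ofReal (768 * τ ^ 2) * ENNReal.ofReal S * ENNReal.ofReal B ^ 3) := by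
          gcongr
          refine (dual_bound hτ b c).trans ?_
          rw [hc]
          gcongr
      _ = _ := by
          rw [← ENNReal.ofReal_pow (by positivity), ← ENNReal.ofReal_pow hB0,
            ← ENNReal.ofReal_mul (by positivity), ← ENNReal.ofReal_mul (by positivity),
            ← ENNReal.ofReal_mul (by positivity)]
          congr 1; ring
  have h3 : S ^ 2 ≤ 12288 * τ ^ 4 * B ^ 3 * S :=
    (ENNReal.ofReal_le_ofReal_iff (by positivity)).1 h2
  rcases hS0.eq_or_lt with h | h
  · rw [← h]; positivity
  · exact le_of_mul_le_mul_right (by linarith [sq S]) h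

theorem R5_L2_bound :
    ∃ C : ℝ, 0 < C ∧ ∀ lam : ℝ, (lam = 1 ∨ lam = -1) → ∀ t τ : ℝ, 0 < τ → τ ≤ 1 / 2 →
      ∀ N : ℕ, 0 < N → ∀ w : FSeq, InHs 1 w →
      hnorm 0 (R5 lam t τ N w) ≤ C * τ ^ 2 * Real.sqrt (Real.log (1 / τ)) * hnorm 1 w ^ 3 := by
  refine ⟨300, by norm_num, fun lam hlam t τ hτ hτ2 N _ w hw => ?_⟩
  set B : ℝ := ∑' k : ℤ, (1 + (k : ℝ) ^ 2) ^ (1 : ℝ) * ‖w k‖ ^ 2 with hBdef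
  have hB0 : 0 ≤ B := tsum_nonneg fun k => by positivity
  have hB : ∑' k, ENNReal.ofReal (derivAbs w k) ^ 2 ≤ ENNReal.ofReal B := by
    rw [hBdef, ENNReal.ofReal_tsum_of_nonneg (fun k => by positivity) hw]
    refine ENNReal.tsum_le_tsum fun k => ?_
    have d0 : 0 ≤ derivAbs w k := by unfold derivAbs; positivity
    rw [← ENNReal.ofReal_pow d0]
    refine ENNReal.ofReal_le_ofReal ?_
    unfold derivAbs
    rw [mul_pow, sq_abs, Real.rpow_one]
    gcongr
    linarith
  have hS : ∑' k : ℤ, (1 + (k : ℝ) ^ 2) ^ (0 : ℝ) * ‖R5 lam t τ N w k‖ ^ 2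
      ≤ 12288 * τ ^ 4 * B ^ 3 := by
    simp only [Real.rpow_zero, one_mul]
    exact Real.tsum_le_of_sum_le (fun k => by positivity)
      fun F => sum_norm_R5_sq_le hlam hτ N w hB0 hB F
  set H : ℝ := hnorm 1 w with hH
  have hH0 : 0 ≤ H := Real.sqrt_nonneg _
  have hpi := Real.pi_gt_three
  have hH2 : H ^ 2 = 2 * Real.pi * B := by
    rw [hH]; unfold hnorm; rw [Real.sq_sqrt (by positivity)]
  -- `log (1/τ) ≥ log 2 ≥ 1/4`
  have hlog : 1 / 2 ≤ Real.sqrt (Real.log (1 / τ)) := by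
    refine Real.le_sqrt_of_sq_le ?_
    have h1 : Real.log 2 ≤ Real.log (1 / τ) := by
      refine Real.log_le_log (by norm_num) ?_
      rw [le_div_iff₀ hτ]; linarith
    have := Real.log_two_gt_d9
    norm_num1 at this ⊢
    linarith
  have hmain : hnorm 0 (R5 lam t τ N w) ≤ 150 * τ ^ 2 * H ^ 3 := by
    unfold hnorm
    refine Real.sqrt_le_iff.2 ⟨by positivity, ?_⟩
    have hH6 : 2 * Real.pi * B ^ 3 ≤ H ^ 6 := by
      have : H ^ 6 = (2 * Real.pi) * (2 * Real.pi) ^ 2 * B ^ 3 := by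
        calc H ^ 6 = (H ^ 2) ^ 3 := by ring
          _ = _ := by rw [hH2]; ring
      rw [this]
      have h1 : 1 ≤ (2 * Real.pi) ^ 2 := by nlinarith
      have h2 : 2 * Real.pi ≤ 2 * Real.pi * (2 * Real.pi) ^ 2 :=
        le_mul_of_one_le_right (by positivity) h1
      exact mul_le_mul_of_nonneg_right h2 (by positivity)
    calc _ ≤ 2 * Real.pi * (12288 * τ ^ 4 * B ^ 3) := by gcongr
      _ = 12288 * τ ^ 4 * (2 * Real.pi * B ^ 3) := by ring
      _ ≤ 12288 * τ ^ 4 * H ^ 6 := by gcongr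
      _ ≤ 22500 * τ ^ 4 * H ^ 6 := by gcongr; norm_num
      _ = _ := by ring
  refine hmain.trans ?_
  calc 150 * τ ^ 2 * H ^ 3 = 300 * τ ^ 2 * (1 / 2) * H ^ 3 := by ring
    _ ≤ _ := by gcongr

end
end
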